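/- arXiv:1204.1961 — 2 statements merged into one kernel-verified Lean document; each statement's English description precedes it below -/
import Mathlib

section
/- In every 2-connected finite simple graph G, the circumference c (the length of a longest cycle) satisfies c ≥ min{n, 2δ}, where n is the number of vertices and δ the minimum degree. -/
open SimpleGraph

variable {V : Type*}

/-- `G` is `k`-connected: more than `k` vertices and removing fewer than `k`
vertices leaves a connected graph. -/
def KConnected (G : SimpleGraph V) [Fintype V] (k : ℕ) : Prop :=
  k < Fintype.card V ∧
    ∀ S : Finset V, S.card < k → (G.induce ((↑S : Set V)ᶜ)).Connected

/-- vertex connectivity `κ`. -/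
noncomputable def connectivity (G : SimpleGraph V) [Fintype V] : ℕ :=
  sSup {k | KConnected G k}

/-- independence number `α`. -/
noncomputable def indepNumber (G : SimpleGraph V) [Fintype V] : ℕ :=
  sSup {k | ∃ s : Finset V, (∀ u ∈ s, ∀ v ∈ s, ¬ G.Adj u v) ∧ s.card = k}

/-- circumference `c`: length of a longest cycle. -/
noncomputable def circumference (G : SimpleGraph V) [Fintype V] : ℕ :=
  sSup {n | ∃ (v : V) (w : G.Walk v v), w.IsCycle ∧ w.length = n}

/-- `w` is a longest cycle of `G`. -/
def IsLongestCycle {G : SimpleGraph V} {v : V} (w : G.Walk v v) : Prop :=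
  w.IsCycle ∧ ∀ (u : V) (w' : G.Walk u u), w'.IsCycle → w'.length ≤ w.length

/-- dominating cycle: every edge has an endpoint on the cycle. -/
def IsDominatingCycle {G : SimpleGraph V} {v : V} (w : G.Walk v v) : Prop :=
  w.IsCycle ∧ ∀ x y, G.Adj x y → x ∈ w.support ∨ y ∈ w.support

/-- generalized cycle of length `n` with vertex set `W`: single vertices are
cycles of length 1, edges are cycles of length 2. -/
def ExtCycle (G : SimpleGraph V) (W : Set V) (n : ℕ) : Prop :=
  (n = 1 ∧ ∃ v : V, W = {v}) ∨
  (n = 2 ∧ ∃ u v : V, G.Adj u v ∧ W = {u, v}) ∨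
  (3 ≤ n ∧ ∃ (v : V) (w : G.Walk v v), w.IsCycle ∧ w.length = n ∧
      W = {x | x ∈ w.support})

/-- `p̄`: the length of a longest path in `G \ C`. -/
noncomputable def pathBar (G : SimpleGraph V) [Fintype V] {v : V} (w : G.Walk v v) : ℕ :=
  sSup {n | ∃ (a b : {x : V | x ∉ w.support})
      (p : (G.induce {x : V | x ∉ w.support}).Walk a b), p.IsPath ∧ p.length = n}

/-- `c̄`: the length of a longest (generalized) cycle in `G \ C`. -/
noncomputable def cycBar (G : SimpleGraph V) [Fintype V] {v : V} (w : G.Walk v v) : ℕ :=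
  sSup {n | ∃ W, ExtCycle (G.induce {x : V | x ∉ w.support}) W n}

/-- `CD_m`-cycle: every (generalized) cycle of length at least `m` meets `w`. -/
def IsCDCycle (G : SimpleGraph V) {v : V} (w : G.Walk v v) (m : ℕ) : Prop :=
  w.IsCycle ∧ ∀ (W : Set V) (n : ℕ), ExtCycle G W n → m ≤ n → ∃ x ∈ W, x ∈ w.support

/-!
Let `p` be a longest path, from `x` to `y`; all neighbours of `x` and `y` lie on `p`. Call positions
`i < j` on `p` a crossing if `x` is adjacent to the `j`-th and `y` to the `i`-th vertex; then
`x ⋯ i y ⋯ j x` is a cycle that misses only the vertices strictly between `i` and `j`.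

* If there is a crossing, take one with `j - i` minimal. When `j = i + 1` the cycle spans `p`, hence
  all of `G`, since a vertex off the cycle would yield a longer path. Otherwise no neighbour of `x`
  or `y` is missed, and the predecessors of the neighbours of `x` are not neighbours of `y`, so the
  cycle has at least `deg x + deg y` vertices.
* If there is none, the last neighbour `a` of `x` does not come after the first neighbour `b` of
  `y`. By Menger's theorem there are two disjoint paths between the segments `x ⋯ a` and `b ⋯ y`,
  one of which starts at `a` and one of which ends at `b`. The two starts are joined inside `x ⋯ a`
  by a path through `x` and all its neighbours, and similarly at `y`; the resulting cycle has length
  at least `deg x + deg y`.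
-/

section Walks

variable {G : SimpleGraph V} {u v w x y : V}

theorem isPath_append_iff {p : G.Walk u v} {q : G.Walk v w} :
    (p.append q).IsPath ↔
      p.IsPath ∧ q.IsPath ∧ ∀ z ∈ p.support, z ∈ q.support → z = v := by
  refine ⟨fun h ↦ ⟨h.of_append_left, h.of_append_right, fun z hp hq ↦ ?_⟩, fun ⟨hp, hq, h⟩ ↦ ?_⟩
  · by_contra hz
    exact h.ne_of_mem_support_of_append hz hp hq rfl
  · have hnodup := hq.support_nodup
    rw [← Walk.cons_tail_support, List.nodup_cons] at hnodup
    rw [Walk.isPath_def, Walk.support_append, List.nodup_append']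
    refine ⟨hp.support_nodup, hnodup.2, fun z hzp hzq ↦ hnodup.1 ?_⟩
    exact h z hzp (List.mem_of_mem_tail hzq) ▸ hzq

theorem isCycle_append_of_isPath {p : G.Walk u v} {q : G.Walk v u} (hp : p.IsPath) (hq : q.IsPath)
    (hpq : ∀ z ∈ p.support, z ∈ q.support → z = u ∨ z = v) (hlen : 1 < p.length ∨ 1 < q.length) :
    (p.append q).IsCycle := by
  have hu := hp.support_nodup
  have hv := hq.support_nodup
  rw [← Walk.cons_tail_support, List.nodup_cons] at hu hv
  refine hp.isCycle_append hq (fun z hzp hzq ↦ ?_) hlen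
  rcases hpq z (List.mem_of_mem_tail hzp) (List.mem_of_mem_tail hzq) with rfl | rfl
  · exact hu.1 hzp
  · exact hv.1 hzq

theorem exists_append_forall_mem_left_imp_eq (p : G.Walk u v) {P : V → Prop}
    (hp : ∃ z ∈ p.support, P z) :
    ∃ (z : V) (q : G.Walk u z) (r : G.Walk z v), p = q.append r ∧ P z ∧
      ∀ t ∈ q.support, P t → t = z := by
  classical
  obtain ⟨s, hs, hPs⟩ := hp
  obtain ⟨z, hz, hzs, hmin⟩ := p.exists_mem_support_forall_mem_support_imp_eq
    (p.support.toFinset.filter P) ⟨s, by simp [hs, hPs]⟩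
  refine ⟨z, p.takeUntil z hzs, p.dropUntil z hzs, (p.take_spec hzs).symm, by simp_all, ?_⟩
  exact fun t ht hPt ↦ hmin t
    (by simpa [hPt] using p.support_takeUntil_subset_support hzs ht) ht

theorem exists_append_forall_mem_right_imp_eq (p : G.Walk u v) {P : V → Prop}
    (hp : ∃ z ∈ p.support, P z) :
    ∃ (z : V) (q : G.Walk u z) (r : G.Walk z v), p = q.append r ∧ P z ∧
      ∀ t ∈ r.support, P t → t = z := by
  obtain ⟨z, q, r, h, hz, hmin⟩ :=
    exists_append_forall_mem_left_imp_eq p.reverse (P := P) (by simpa using hp)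
  refine ⟨z, r.reverse, q.reverse, ?_, hz, by simpa using hmin⟩
  rw [← Walk.reverse_append, ← h, Walk.reverse_reverse]

theorem degree_le_length {p : G.Walk u v} [Fintype (G.neighborSet x)] (hx : x ∈ p.support)
    (hN : ∀ z, G.Adj x z → z ∈ p.support) : G.degree x ≤ p.length := by
  classical
  have hsub : G.neighborFinset x ⊆ p.support.toFinset.erase x := fun z hz ↦ by
    have hz := (G.mem_neighborFinset x z).1 hz
    simpa [hz.ne'] using hN z hz
  calc G.degree x = (G.neighborFinset x).card := (G.card_neighborFinset_eq_degree x).symm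
    _ ≤ (p.support.toFinset.erase x).card := Finset.card_le_card hsub
    _ = p.support.toFinset.card - 1 := Finset.card_erase_of_mem (by simpa using hx)
    _ ≤ p.support.length - 1 := Nat.sub_le_sub_right p.support.toFinset_card_le 1
    _ = p.length := by rw [Walk.length_support, Nat.add_sub_cancel]

/-- Go back along `p` from `s` to `x`, then jump to the first neighbour of `x` beyond `s`: no
neighbour of `x` is lost. -/
theorem exists_isPath_forall_adj_mem_support {p : G.Walk x u} (hp : p.IsPath) (hxu : G.Adj x u)
    (hN : ∀ z, G.Adj x z → z ∈ p.support) {s : V} (hs : s ∈ p.support) (hsu : s ≠ u) :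
    ∃ q : G.Walk s u, q.IsPath ∧ q.support ⊆ p.support ∧ x ∈ q.support ∧
      ∀ z, G.Adj x z → z ∈ q.support := by
  obtain ⟨σ, τ, rfl⟩ := Walk.mem_support_iff_exists_append.1 hs
  obtain ⟨hσ, hτ, hdisj⟩ := isPath_append_iff.1 hp
  obtain ⟨w, τ₁, τ₂, rfl, ⟨hxw, hws⟩, hmin⟩ := exists_append_forall_mem_left_imp_eq τ
    (P := fun w ↦ G.Adj x w ∧ w ≠ s) ⟨u, by simp, hxu, hsu.symm⟩
  obtain ⟨-, hτ₂, hdisj'⟩ := isPath_append_iff.1 hτ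
  have hστ₂ : ∀ z ∈ σ.support, z ∉ τ₂.support := fun z hz hz' ↦ by
    obtain rfl := hdisj z hz (by simp [Walk.mem_support_append_iff, hz'])
    exact hws (hdisj' z (by simp) hz').symm
  let q := σ.reverse.append (Walk.cons hxw τ₂)
  have hmem : ∀ z, z ∈ q.support ↔ z ∈ σ.support ∨ z ∈ τ₂.support := fun z ↦ by
    simp only [q, Walk.mem_support_append_iff, Walk.support_reverse, List.mem_reverse,
      Walk.support_cons, List.mem_cons]
    constructor
    · rintro (h | rfl | h) <;> simp [*]
    · tauto
  simp only [Walk.mem_support_append_iff] at hN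
  refine ⟨q, ?_, fun z hz ↦ ?_, (hmem x).2 (by simp), fun z hz ↦ (hmem z).2 ?_⟩
  · refine isPath_append_iff.2 ⟨hσ.reverse, hτ₂.cons (hστ₂ x (by simp)), fun z hz hz' ↦ ?_⟩
    simp only [Walk.support_reverse, List.mem_reverse] at hz
    simpa [hστ₂ z hz] using hz'
  · simp only [Walk.mem_support_append_iff]
    exact ((hmem z).1 hz).imp_right .inr
  · rcases hN z hz with hzσ | hzτ₁ | hzτ₂
    · exact .inl hzσ
    · by_cases hzs : z = s
      · exact .inl (by simp [hzs])
      · exact .inr (by simp [hmin z hzτ₁ ⟨hz, hzs⟩])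
    · exact .inr hzτ₂

theorem exists_isPath_degree_le_length {p : G.Walk x u} [Fintype (G.neighborSet x)]
    (hp : p.IsPath) (hxu : G.Adj x u) (hN : ∀ z, G.Adj x z → z ∈ p.support) {s : V}
    (hs : s ∈ p.support) (hsu : s ≠ u) :
    ∃ q : G.Walk s u, q.IsPath ∧ q.support ⊆ p.support ∧ G.degree x ≤ q.length :=
  let ⟨q, hq, hsub, hx, hNq⟩ := exists_isPath_forall_adj_mem_support hp hxu hN hs hsu
  ⟨q, hq, hsub, degree_le_length hx hNq⟩

theorem exists_isPath_degree_le_length_of_eq_end {p : G.Walk x u} [Fintype (G.neighborSet x)]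
    (hp : p.IsPath) (hxu : G.Adj x u) (hN : ∀ z, G.Adj x z → z ∈ p.support) {s t : V}
    (hs : s ∈ p.support) (ht : t ∈ p.support) (hst : s ≠ t) (hu : s = u ∨ t = u) :
    ∃ q : G.Walk s t, q.IsPath ∧ q.support ⊆ p.support ∧ G.degree x ≤ q.length := by
  rcases hu with rfl | rfl
  · obtain ⟨q, hq, hsub, hlen⟩ := exists_isPath_degree_le_length hp hxu hN ht hst.symm
    exact ⟨q.reverse, hq.reverse, by simpa using hsub, by simpa using hlen⟩
  · exact exists_isPath_degree_le_length hp hxu hN hs hst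

end Walks

/-- `p` is an `A`–`B` path: its start is its only vertex in `A` and its end is its only vertex
in `B`. -/
structure IsPathBetween {G : SimpleGraph V} (A B : Set V) {u v : V} (p : G.Walk u v) : Prop where
  isPath : p.IsPath
  start_mem : u ∈ A
  end_mem : v ∈ B
  eq_start : ∀ x ∈ p.support, x ∈ A → x = u
  eq_end : ∀ x ∈ p.support, x ∈ B → x = v

section IsPathBetween

variable {G : SimpleGraph V} {A A' B B' : Set V} {u v w x y : V}

theorem exists_isPathBetween_support_subset {p : G.Walk u v} (hp : p.IsPath) (hu : u ∈ A)
    (hv : v ∈ B) :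
    ∃ (a b : V) (q : G.Walk a b), IsPathBetween A B q ∧ q.support ⊆ p.support := by
  obtain ⟨b, p', r, rfl, hb, hmin⟩ :=
    exists_append_forall_mem_left_imp_eq p (P := (· ∈ B)) ⟨v, by simp, hv⟩
  obtain ⟨a, s, q, rfl, ha, hmax⟩ :=
    exists_append_forall_mem_right_imp_eq p' (P := (· ∈ A)) ⟨u, by simp, hu⟩
  refine ⟨a, b, q, ⟨hp.of_append_left.of_append_right, ha, hb, hmax, fun x hx ↦ hmin x ?_⟩,
    fun x hx ↦ ?_⟩ <;> simp [Walk.mem_support_append_iff, hx]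

namespace IsPathBetween

theorem mono {p : G.Walk u v} (hp : IsPathBetween A B p) (hA : A' ⊆ A) (hB : B' ⊆ B)
    (hu : u ∈ A') (hv : v ∈ B') : IsPathBetween A' B' p :=
  ⟨hp.isPath, hu, hv, fun x hx h ↦ hp.eq_start x hx (hA h), fun x hx h ↦ hp.eq_end x hx (hB h)⟩

theorem tail {h : G.Adj u w} {p : G.Walk w v} (hp : IsPathBetween A B (.cons h p)) :
    IsPathBetween (insert w A) B p := by
  obtain ⟨hpath, hu⟩ := (Walk.cons_isPath_iff h p).1 hp.isPath
  refine ⟨hpath, .inl rfl, hp.end_mem, fun x hx hxA ↦ hxA.resolve_right fun hxA ↦ ?_,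
    fun x hx ↦ hp.eq_end x (by simp [hx])⟩
  exact hu (hp.eq_start x (by simp [hx]) hxA ▸ hx)

theorem cons {p : G.Walk w v} (hp : IsPathBetween (insert w A) B p) (h : G.Adj u w)
    (hw : w ∉ A) (huA : u ∈ A) (huB : u ∉ B) : IsPathBetween A B (.cons h p) := by
  have hA : ∀ x ∈ p.support, x ∉ A := fun x hx hxA ↦
    hw (hp.eq_start x hx (.inr hxA) ▸ hxA)
  refine ⟨hp.isPath.cons fun hu ↦ hA u hu huA, huA, hp.end_mem, ?_, ?_⟩
  all_goals
    simp only [Walk.support_cons, List.mem_cons, forall_eq_or_imp]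
  · exact ⟨fun _ ↦ trivial, fun x hx hxA ↦ (hA x hx hxA).elim⟩
  · exact ⟨fun huB' ↦ (huB huB').elim, hp.eq_end⟩

theorem exists_reroute {X : Set V} {p : G.Walk u v} (hp : IsPathBetween A B p)
    {r : G.Walk x y} (hr : IsPathBetween A X r) (hBX : B ⊆ X) (hpX : ∀ z ∈ p.support, z ∈ X)
    (hy : y ∈ p.support) (hur : u ∉ r.support) :
    ∃ q : G.Walk x v, IsPathBetween A B q ∧ ∀ z ∈ q.support, z ∈ r.support ∨ z ∈ p.support := by
  obtain ⟨p₁, p₂, rfl⟩ := Walk.mem_support_iff_exists_append.1 hy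
  obtain ⟨-, hp₂, hdisj⟩ := isPath_append_iff.1 hp.isPath
  have hsub : ∀ z ∈ p₂.support, z ∈ (p₁.append p₂).support := fun z hz ↦
    (Walk.mem_support_append_iff _ _).2 (.inr hz)
  have hup₂ : u ∉ p₂.support := fun hu ↦
    hur (by rw [hdisj u p₁.start_mem_support hu]; exact r.end_mem_support)
  refine ⟨r.append p₂, ⟨?_, hr.start_mem, hp.end_mem, fun z hz hzA ↦ ?_, fun z hz hzB ↦ ?_⟩, ?_⟩
  · exact isPath_append_iff.2 ⟨hr.isPath, hp₂, fun z hz hz' ↦ hr.eq_end z hz (hpX z (hsub z hz'))⟩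
  · rcases (Walk.mem_support_append_iff _ _).1 hz with hz | hz
    · exact hr.eq_start z hz hzA
    · exact (hup₂ (hp.eq_start z (hsub z hz) hzA ▸ hz)).elim
  · rcases (Walk.mem_support_append_iff _ _).1 hz with hz | hz
    · obtain rfl := hr.eq_end z hz (hBX hzB)
      exact hp.eq_end z hy hzB
    · exact hp.eq_end z (hsub z hz) hzB
  · exact fun z hz ↦ ((Walk.mem_support_append_iff _ _).1 hz).imp_right (hsub z)

end IsPathBetween

end IsPathBetween

namespace KConnected

variable {G : SimpleGraph V} [Fintype V] {k : ℕ}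

theorem exists_isPath (h : KConnected G k) {S : Finset V} (hS : S.card < k) {u v : V}
    (hu : u ∉ S) (hv : v ∉ S) : ∃ p : G.Walk u v, p.IsPath ∧ ∀ x ∈ p.support, x ∉ S := by
  obtain ⟨p, hp⟩ := (h.2 S hS).exists_isPath ⟨u, by simpa using hu⟩ ⟨v, by simpa using hv⟩
  refine ⟨p.map (Embedding.induce (G := G) _).toHom,
    hp.map (Embedding.induce (G := G) _).injective, fun x hx ↦ ?_⟩
  obtain ⟨y, -, rfl⟩ := List.mem_map.1 (Walk.support_map _ p ▸ hx)
  exact y.2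

theorem connected (h : KConnected G k) (hk : 0 < k) : G.Connected := by
  have : Nonempty V := Fintype.card_pos_iff.1 (by have := h.1; omega)
  refine ⟨fun u v ↦ ?_⟩
  obtain ⟨p, -⟩ := h.exists_isPath (S := ∅) (by simpa) (Finset.notMem_empty u)
    (Finset.notMem_empty v)
  exact ⟨p⟩

theorem exists_isPathBetween (h : KConnected G k) {S : Finset V} (hS : S.card < k) {A B : Set V}
    (hA : ∃ u ∈ A, u ∉ S) (hB : ∃ v ∈ B, v ∉ S) :
    ∃ (a b : V) (p : G.Walk a b), IsPathBetween A B p ∧ ∀ x ∈ p.support, x ∉ S := by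
  obtain ⟨u, huA, huS⟩ := hA
  obtain ⟨v, hvB, hvS⟩ := hB
  obtain ⟨p, hp, hpS⟩ := h.exists_isPath hS huS hvS
  obtain ⟨a, b, q, hq, hqp⟩ := exists_isPathBetween_support_subset hp huA hvB
  exact ⟨a, b, q, hq, fun x hx ↦ hpS x (hqp hx)⟩

theorem le_degree (h : KConnected G k) (v : V) [Fintype (G.neighborSet v)] : k ≤ G.degree v := by
  classical
  by_contra! hlt
  have hcard : (insert v (G.neighborFinset v)).card < Fintype.card V :=
    calc (insert v (G.neighborFinset v)).card ≤ G.degree v + 1 := Finset.card_insert_le _ _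
      _ ≤ k := hlt
      _ < Fintype.card V := h.1
  obtain ⟨w, -, hw⟩ := Finset.exists_mem_notMem_of_card_lt_card hcard
  rw [Finset.mem_insert, not_or] at hw
  obtain ⟨p, -, hpS⟩ := h.exists_isPath (S := G.neighborFinset v) (u := v) (v := w)
    (by rwa [G.card_neighborFinset_eq_degree]) (by simp) hw.2
  have hnil : ¬ p.Nil := Walk.not_nil_of_ne (Ne.symm hw.1)
  exact hpS p.snd (by simp) ((G.mem_neighborFinset v _).2 (p.adj_snd hnil))

end KConnected

/-- Two disjoint `A`–`B` paths, one of which starts at `a` and one of which (possibly the other)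
ends at `b`. -/
def HasLinkage (G : SimpleGraph V) (A B : Set V) (a b : V) : Prop :=
  ∃ (b₁ a₂ b₂ : V) (p : G.Walk a b₁) (q : G.Walk a₂ b₂), IsPathBetween A B p ∧
    IsPathBetween A B q ∧ p.support.Disjoint q.support ∧ (b₁ = b ∨ b₂ = b)

section Linkage

variable {G : SimpleGraph V} {A B : Set V} {a a₀ b : V}

theorem KConnected.hasLinkage_self [Fintype V] (h : KConnected G 2) (hA : A.Nontrivial)
    (hB : B.Nontrivial) (haA : a ∈ A) (haB : a ∈ B) : HasLinkage G A B a a := by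
  obtain ⟨a₂, b₂, q, hq, hqa⟩ := h.exists_isPathBetween (S := {a}) (by simp)
    (by simpa using hA.exists_ne a) (by simpa using hB.exists_ne a)
  refine ⟨a, a₂, b₂, .nil, q, ⟨.nil, haA, haB, by simp, by simp⟩, hq, ?_, .inl rfl⟩
  simpa [List.Disjoint] using fun ha : a ∈ q.support ↦ hqa a ha

theorem IsPathBetween.hasLinkage_of_end_mem_support {X : Set V} {b₁ b₂ x t : V}
    {p : G.Walk a b₁} {q : G.Walk a b₂} {r : G.Walk x t} (hp : IsPathBetween A B p)
    (hq : IsPathBetween A B q) (hpq : ∀ z ∈ p.support, z ∈ q.support → z = a)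
    (hr : IsPathBetween A X r) (hBX : B ⊆ X) (hpX : ∀ z ∈ p.support, z ∈ X)
    (hqX : ∀ z ∈ q.support, z ∈ X) (har : a ∉ r.support) (ht : t ∈ p.support)
    (hb : b₁ = b ∨ b₂ = b) : HasLinkage G A B a b := by
  obtain ⟨p', hp', hsub⟩ := hp.exists_reroute hr hBX hpX ht har
  have ha : a ∉ p'.support := fun ha ↦
    har (by rw [hp'.eq_start a ha hp.start_mem]; exact r.start_mem_support)
  have hqr : ∀ z ∈ q.support, z ∉ r.support := fun z hzq hzr ↦ by
    obtain rfl := hr.eq_end z hzr (hqX z hzq)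
    exact har (hpq z ht hzq ▸ hzr)
  refine ⟨b₂, x, b₁, q, p', hq, hp', fun z hzq hz ↦ ?_, hb.symm⟩
  rcases hsub z hz with hzr | hzp
  · exact hqr z hzq hzr
  · exact ha (hpq z hzp hzq ▸ hz)

/-- A third path, which leaves `A` elsewhere, follows the first of the two paths that it meets;
the other one is kept. -/
theorem KConnected.hasLinkage_of_common_start [Fintype V] (h : KConnected G 2)
    (hA : A.Nontrivial) (haB : a ∉ B) {b₁ b₂ : V} {p : G.Walk a b₁} {q : G.Walk a b₂}
    (hp : IsPathBetween A B p) (hq : IsPathBetween A B q)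
    (hpq : ∀ z ∈ p.support, z ∈ q.support → z = a) (hb : b₁ = b ∨ b₂ = b) :
    HasLinkage G A B a b := by
  let X : Set V := B ∪ {z | z ∈ p.support ∨ z ∈ q.support}
  have hBX : B ⊆ X := Set.subset_union_left
  have hpX : ∀ z ∈ p.support, z ∈ X := fun z hz ↦ .inr (.inl hz)
  have hqX : ∀ z ∈ q.support, z ∈ X := fun z hz ↦ .inr (.inr hz)
  obtain ⟨x, t, r, hr, har⟩ := h.exists_isPathBetween (S := {a}) (A := A) (B := X) (by simp)
    (by simpa using hA.exists_ne a)
    ⟨b₁, .inl hp.end_mem, by simpa using ne_of_mem_of_not_mem hp.end_mem haB⟩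
  replace har : a ∉ r.support := fun ha ↦ by simpa using har a ha
  by_cases htp : t ∈ p.support
  · exact hp.hasLinkage_of_end_mem_support hq hpq hr hBX hpX hqX har htp hb
  by_cases htq : t ∈ q.support
  · exact hq.hasLinkage_of_end_mem_support hp (fun z hzq hzp ↦ hpq z hzp hzq) hr hBX hqX hpX har
      htq hb.symm
  have htB : t ∈ B := by simpa [X, htp, htq] using hr.end_mem
  have hr' : IsPathBetween A B r := hr.mono subset_rfl hBX hr.start_mem htB
  rcases hb with hb | hb
  · exact ⟨b₁, x, t, p, r, hp, hr', fun z hz hzr ↦ htp (hr.eq_end z hzr (hpX z hz) ▸ hz), .inl hb⟩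
  · exact ⟨b₂, x, t, q, r, hq, hr', fun z hz hzr ↦ htq (hr.eq_end z hzr (hqX z hz) ▸ hz), .inl hb⟩

theorem KConnected.hasLinkage_of_adj [Fintype V] (h : KConnected G 2) (hA : A.Nontrivial)
    (haA : a ∈ A) (haB : a ∉ B) (ha₀ : a₀ ∉ A) (hadj : G.Adj a a₀)
    (hl : HasLinkage G (insert a₀ A) B a₀ b) : HasLinkage G A B a b := by
  obtain ⟨b₁, a₂, b₂, p, q, hp, hq, hpq, hb⟩ := hl
  have hp' := hp.cons hadj ha₀ haA haB
  have ha₂ : a₂ ∈ A := hq.start_mem.resolve_left fun h ↦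
    hpq p.start_mem_support (h ▸ q.start_mem_support)
  have hq' := hq.mono (Set.subset_insert _ _) subset_rfl ha₂ hq.end_mem
  by_cases haa₂ : a₂ = a
  · subst haa₂
    refine h.hasLinkage_of_common_start hA haB hp' hq' (fun z hz hzq ↦ ?_) hb
    exact (List.mem_cons.1 hz).resolve_right (hpq · hzq)
  · refine ⟨b₁, a₂, b₂, _, q, hp', hq', ?_, hb⟩
    rw [Walk.support_cons, List.disjoint_cons_left]
    exact ⟨fun ha ↦ haa₂ (hq'.eq_start a ha haA).symm, hpq⟩

/-- Menger's theorem for two paths, in the form of Perfect: the ends of a given `A`–`B` path remain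
ends of the linkage. -/
theorem KConnected.hasLinkage [Fintype V] (h : KConnected G 2) (hA : A.Nontrivial)
    (hB : B.Nontrivial) {p : G.Walk a b} (hp : IsPathBetween A B p) : HasLinkage G A B a b := by
  induction p generalizing A with
  | nil => exact h.hasLinkage_self hA hB hp.start_mem hp.end_mem
  | @cons a a₀ b hadj p ih =>
    have hap := ((Walk.cons_isPath_iff hadj p).1 hp.isPath).2
    have haB : a ∉ B := fun haB ↦
      hap (by rw [hp.eq_end a (by simp) haB]; exact p.end_mem_support)
    have ha₀ : a₀ ∉ A := fun ha₀ ↦ hadj.ne' (hp.eq_start a₀ (by simp) ha₀)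
    exact h.hasLinkage_of_adj hA hp.start_mem haB ha₀ hadj
      (ih (hA.mono (Set.subset_insert _ _)) hp.tail)

end Linkage

section Vine

variable {G : SimpleGraph V} {A B : Set V} {a a₁ a₂ b b₁ b₂ x y : V}

theorem IsPathBetween.isCycle_append {p : G.Walk a₁ b₁} {q : G.Walk a₂ b₂}
    (hp : IsPathBetween A B p) (hq : IsPathBetween A B q) (hpq : p.support.Disjoint q.support)
    (hAB : ∀ z ∈ A, z ∈ B → z ∈ p.support) {α : G.Walk a₂ a₁} (hα : α.IsPath)
    (hαA : ∀ z ∈ α.support, z ∈ A) {β : G.Walk b₁ b₂} (hβ : β.IsPath)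
    (hβB : ∀ z ∈ β.support, z ∈ B) : ((α.append p).append (β.append q.reverse)).IsCycle := by
  have hαp : (α.append p).IsPath :=
    isPath_append_iff.2 ⟨hα, hp.isPath, fun z hz hzp ↦ hp.eq_start z hzp (hαA z hz)⟩
  have hβq : (β.append q.reverse).IsPath :=
    isPath_append_iff.2 ⟨hβ, hq.isPath.reverse, fun z hz hzq ↦
      hq.eq_end z (by simpa using hzq) (hβB z hz)⟩
  have hβ_ne : β.length ≠ 0 := fun h ↦
    hpq (Walk.eq_of_length_eq_zero h ▸ p.end_mem_support) q.end_mem_support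
  have hq_ne : q.length ≠ 0 := fun h ↦
    hpq (hAB a₂ hq.start_mem (Walk.eq_of_length_eq_zero h ▸ hq.end_mem)) q.start_mem_support
  refine isCycle_append_of_isPath hαp hβq (fun z hz hz' ↦ ?_) ?_
  · simp only [Walk.mem_support_append_iff, Walk.support_reverse, List.mem_reverse] at hz hz'
    rcases hz, hz' with ⟨hzα | hzp, hzβ | hzq⟩
    · exact .inr (hp.eq_end z (hAB z (hαA z hzα) (hβB z hzβ)) (hβB z hzβ))
    · exact .inl (hq.eq_start z hzq (hαA z hzα))
    · exact .inr (hp.eq_end z hzp (hβB z hzβ))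
    · exact (hpq hzp hzq).elim
  · simp only [Walk.length_append, Walk.length_reverse]
    omega

theorem KConnected.exists_isCycle_degree_add_degree_le [Fintype V] (h : KConnected G 2)
    [Fintype (G.neighborSet x)] [Fintype (G.neighborSet y)] {α : G.Walk x a} {μ : G.Walk a b}
    {β : G.Walk b y} (hpath : (α.append (μ.append β)).IsPath) (hxa : G.Adj x a)
    (hyb : G.Adj y b) (hx : ∀ z, G.Adj x z → z ∈ α.support)
    (hy : ∀ z, G.Adj y z → z ∈ β.support) :
    ∃ (v : V) (c : G.Walk v v), c.IsCycle ∧ G.degree x + G.degree y ≤ c.length := by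
  obtain ⟨hα, hμβ, hdisj⟩ := isPath_append_iff.1 hpath
  obtain ⟨hμ, hβ, hdisj'⟩ := isPath_append_iff.1 hμβ
  simp only [Walk.mem_support_append_iff] at hdisj
  have hμAB : IsPathBetween {z | z ∈ α.support} {z | z ∈ β.support} μ :=
    ⟨hμ, α.end_mem_support, β.start_mem_support, fun z hz hzα ↦ hdisj z hzα (.inl hz),
      fun z hz hzβ ↦ hdisj' z hz hzβ⟩
  obtain ⟨b₁, a₂, b₂, p, q, hp, hq, hpq, hb⟩ := h.hasLinkage
    ⟨x, α.start_mem_support, a, α.end_mem_support, hxa.ne⟩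
    ⟨b, β.start_mem_support, y, β.end_mem_support, hyb.ne'⟩ hμAB
  have ha₂ : a₂ ≠ a := fun ha ↦ hpq p.start_mem_support (ha ▸ q.start_mem_support)
  have hb₁₂ : b₁ ≠ b₂ := fun hb ↦ hpq p.end_mem_support (hb ▸ q.end_mem_support)
  obtain ⟨α', hα', hαα, hlenα⟩ := exists_isPath_degree_le_length_of_eq_end hα hxa hx
    hq.start_mem hp.start_mem ha₂ (.inr rfl)
  obtain ⟨β', hβ', hββ, hlenβ⟩ := exists_isPath_degree_le_length_of_eq_end hβ.reverse hyb
    (by simpa using hy) (by simpa using hp.end_mem) (by simpa using hq.end_mem) hb₁₂ hb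
  replace hββ : ∀ z ∈ β'.support, z ∈ β.support := fun z hz ↦ by simpa using hββ hz
  refine ⟨a₂, _, hp.isCycle_append hq hpq (fun z hzα hzβ ↦ ?_) hα' (fun z hz ↦ hαα hz) hβ' hββ, ?_⟩
  · exact hdisj z hzα (.inr hzβ) ▸ p.start_mem_support
  · simp only [Walk.length_append]
    omega

end Vine

/-- Positions `i < j` on the walk `p` form a crossing if the start of `p` is adjacent to the vertex
at position `j` and its end is adjacent to the vertex at position `i`. -/
def IsCrossing {G : SimpleGraph V} {x y : V} (p : G.Walk x y) (i j : ℕ) : Prop :=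
  i < j ∧ j ≤ p.length ∧ G.Adj x (p.getVert j) ∧ G.Adj y (p.getVert i)

section Crossing

variable {G : SimpleGraph V} {b x y z : V} {p : G.Walk x y} {i j n : ℕ}

theorem mem_support_take_iff {v : V} :
    v ∈ (p.take n).support ↔ ∃ m ≤ n, m ≤ p.length ∧ p.getVert m = v := by
  rw [Walk.mem_support_iff_exists_getVert]
  simp only [Walk.take_getVert, Walk.take_length, le_inf_iff]
  constructor
  · rintro ⟨m, rfl, hmn, hm⟩
    exact ⟨m, hmn, hm, by rw [min_eq_right hmn]⟩
  · rintro ⟨m, hmn, hm, rfl⟩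
    exact ⟨m, by rw [min_eq_right hmn], hmn, hm⟩

theorem mem_support_drop_iff {v : V} (hn : n ≤ p.length) :
    v ∈ (p.drop n).support ↔ ∃ m, n ≤ m ∧ m ≤ p.length ∧ p.getVert m = v := by
  rw [Walk.mem_support_iff_exists_getVert]
  simp only [Walk.drop_getVert, Walk.drop_length]
  constructor
  · rintro ⟨m, rfl, hm⟩
    exact ⟨n + m, by omega, by omega, rfl⟩
  · rintro ⟨m, hnm, hm, rfl⟩
    exact ⟨m - n, by rw [Nat.add_sub_cancel' hnm], by omega⟩

theorem degree_start_le_card [DecidablePred (G.Adj x)] [Fintype (G.neighborSet x)]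
    (hx : ∀ z, G.Adj x z → z ∈ p.support) :
    G.degree x ≤ {k ∈ Finset.range p.length | G.Adj x (p.getVert (k + 1))}.card := by
  classical
  rw [← G.card_neighborFinset_eq_degree]
  refine (Finset.card_le_card fun z hz ↦ ?_).trans
    (Finset.card_image_le (f := fun k ↦ p.getVert (k + 1)))
  rw [mem_neighborFinset] at hz
  obtain ⟨_ | k, rfl, hk⟩ := Walk.mem_support_iff_exists_getVert.1 (hx z hz)
  · simp at hz
  · exact Finset.mem_image.2 ⟨k, by simpa using ⟨hk, hz⟩, rfl⟩

theorem degree_end_le_card [DecidablePred (G.Adj y)] [Fintype (G.neighborSet y)]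
    (hy : ∀ z, G.Adj y z → z ∈ p.support) :
    G.degree y ≤ {k ∈ Finset.range p.length | G.Adj y (p.getVert k)}.card := by
  classical
  rw [← G.card_neighborFinset_eq_degree]
  refine (Finset.card_le_card fun z hz ↦ ?_).trans (Finset.card_image_le (f := p.getVert))
  rw [mem_neighborFinset] at hz
  obtain ⟨k, rfl, hk⟩ := Walk.mem_support_iff_exists_getVert.1 (hy z hz)
  have hkp : k ≠ p.length := by
    rintro rfl
    simp at hz
  exact Finset.mem_image.2 ⟨k, by simpa using ⟨by omega, hz⟩, rfl⟩

namespace IsCrossing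

/-- The cycle runs from `x` to position `j`, along `p` to `y`, then to position `i`, and back along
`p` to `x`. -/
theorem exists_isCycle (hc : IsCrossing p i j) (hp : p.IsPath) (h : 0 < i ∨ j < p.length) :
    ∃ (v : V) (c : G.Walk v v), c.IsCycle ∧ c.length = (i + 1) + (p.length - j + 1) := by
  obtain ⟨hij, hj, hxj, hyi⟩ := hc
  have hinj := hp.getVert_injOn
  have hdisj : ∀ z ∈ (p.drop j).support, z ∉ (p.take i).support := fun z hz hz' ↦ by
    obtain ⟨m, hjm, hm, rfl⟩ := (mem_support_drop_iff hj).1 hz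
    obtain ⟨k, hki, hk, hkm⟩ := mem_support_take_iff.1 hz'
    have := hinj hk hm hkm
    omega
  have hx : x ∉ (p.drop j).support := fun hx ↦ hdisj x hx (p.take i).start_mem_support
  have hy : y ∉ (p.take i).reverse.support := fun hy ↦
    hdisj y (p.drop j).end_mem_support (by simpa using hy)
  refine ⟨x, (Walk.cons hxj (p.drop j)).append (Walk.cons hyi (p.take i).reverse),
    isCycle_append_of_isPath ((hp.drop j).cons hx) ((hp.take i).reverse.cons hy)
      (fun z hz hz' ↦ ?_) ?_, ?_⟩
  · simp only [Walk.support_cons, Walk.support_reverse, List.mem_cons, List.mem_reverse] at hz hz'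
    rcases hz, hz' with ⟨hz | hz, hz' | hz'⟩
    · exact .inl hz
    · exact .inl hz
    · exact .inr hz'
    · exact (hdisj z hz hz').elim
  all_goals
    simp only [Walk.length_append, Walk.length_cons, Walk.length_reverse, Walk.drop_length,
      Walk.take_length]
    omega

theorem exists_minimal (hc : IsCrossing p i j) :
    ∃ i j, IsCrossing p i j ∧ ∀ i' j', IsCrossing p i' j' → j - i ≤ j' - i' := by
  obtain ⟨⟨i, j⟩, hij, hmin⟩ := (measure fun k : ℕ × ℕ ↦ k.2 - k.1).wf.has_min
    {k | IsCrossing p k.1 k.2} ⟨(i, j), hc⟩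
  exact ⟨i, j, hij, fun i' j' h ↦ not_lt.1 (hmin (i', j') h)⟩

theorem degree_add_degree_le [Fintype (G.neighborSet x)] [Fintype (G.neighborSet y)]
    (hc : IsCrossing p i j) (hmin : ∀ i' j', IsCrossing p i' j' → j - i ≤ j' - i')
    (hij : i + 1 < j) (hx : ∀ z, G.Adj x z → z ∈ p.support)
    (hy : ∀ z, G.Adj y z → z ∈ p.support) :
    G.degree x + G.degree y ≤ (i + 1) + (p.length - j + 1) := by
  classical
  obtain ⟨-, hj, hxj, hyi⟩ := hc
  let X := {k ∈ Finset.range p.length | G.Adj x (p.getVert (k + 1))}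
  let Y := {k ∈ Finset.range p.length | G.Adj y (p.getVert k)}
  have hXY : Disjoint X Y := Finset.disjoint_left.2 fun k hkX hkY ↦ by
    simp only [X, Y, Finset.mem_filter, Finset.mem_range] at hkX hkY
    have := hmin k (k + 1) ⟨by omega, by omega, hkX.2, hkY.2⟩
    omega
  have hsub : X ∪ Y ⊆ Finset.range (i + 1) ∪ Finset.Ico (j - 1) p.length := fun k hk ↦ by
    simp only [X, Y, Finset.mem_union, Finset.mem_filter, Finset.mem_range, Finset.mem_Ico] at hk ⊢
    by_contra! hgap
    rcases hk with ⟨hk, hxk⟩ | ⟨hk, hyk⟩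
    · have := hmin i (k + 1) ⟨by omega, by omega, hxk, hyi⟩
      omega
    · have := hmin k j ⟨by omega, hj, hxj, hyk⟩
      omega
  calc G.degree x + G.degree y ≤ X.card + Y.card :=
      Nat.add_le_add (degree_start_le_card hx) (degree_end_le_card hy)
    _ = (X ∪ Y).card := (Finset.card_union_of_disjoint hXY).symm
    _ ≤ (Finset.range (i + 1) ∪ Finset.Ico (j - 1) p.length).card := Finset.card_le_card hsub
    _ ≤ (Finset.range (i + 1)).card + (Finset.Ico (j - 1) p.length).card :=
      Finset.card_union_le _ _
    _ = (i + 1) + (p.length - j + 1) := by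
      rw [Finset.card_range, Nat.card_Ico]
      omega

end IsCrossing

theorem exists_isCrossing_append {γ : G.Walk x b} {β : G.Walk b y} (hyb : G.Adj y b)
    (hxz : G.Adj x z) (hz : z ∈ β.support) (hzb : z ≠ b) :
    ∃ i j, IsCrossing (γ.append β) i j := by
  obtain ⟨m, rfl, hm⟩ := Walk.mem_support_iff_exists_getVert.1 hz
  have hm₀ : 0 < m := Nat.pos_of_ne_zero (by rintro rfl; simp at hzb)
  refine ⟨γ.length, γ.length + m, by omega, by simpa using hm, ?_, ?_⟩
  · simpa [Walk.getVert_append] using hxz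
  · simpa [Walk.getVert_append] using hyb

theorem exists_isCrossing_or_exists_append (p : G.Walk x y) (hx : ∃ z ∈ p.support, G.Adj x z)
    (hxp : ∀ z, G.Adj x z → z ∈ p.support) (hy : ∃ z ∈ p.support, G.Adj y z)
    (hyp : ∀ z, G.Adj y z → z ∈ p.support) :
    (∃ i j, IsCrossing p i j) ∨ ∃ (a b : V) (α : G.Walk x a) (μ : G.Walk a b) (β : G.Walk b y),
      p = α.append (μ.append β) ∧ G.Adj x a ∧ G.Adj y b ∧ (∀ z, G.Adj x z → z ∈ α.support) ∧
        ∀ z, G.Adj y z → z ∈ β.support := by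
  obtain ⟨b, γ, β, rfl, hyb, hfirst⟩ := exists_append_forall_mem_left_imp_eq p hy
  simp only [Walk.mem_support_append_iff] at hx hxp hyp
  by_cases hcross : ∃ z ∈ β.support, z ≠ b ∧ G.Adj x z
  · obtain ⟨z, hz, hzb, hxz⟩ := hcross
    exact .inl (exists_isCrossing_append hyb hxz hz hzb)
  push Not at hcross
  have hxγ : ∀ z, G.Adj x z → z ∈ γ.support := fun z hz ↦ (hxp z hz).elim id fun hzβ ↦ by
    rw [not_imp_comm.1 (hcross z hzβ) (not_not.2 hz)]
    exact γ.end_mem_support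
  obtain ⟨c, -, hxc⟩ := hx
  obtain ⟨a, α, μ, rfl, hxa, hlast⟩ :=
    exists_append_forall_mem_right_imp_eq γ ⟨c, hxγ c hxc, hxc⟩
  simp only [Walk.mem_support_append_iff] at hxγ
  refine .inr ⟨a, b, α, μ, β, (Walk.append_assoc _ _ _).symm, hxa, hyb, fun z hz ↦ ?_,
    fun z hz ↦ ?_⟩
  · exact (hxγ z hz).elim id fun hzμ ↦ hlast z hzμ hz ▸ α.end_mem_support
  · exact (hyp z hz).elim (fun hzγ ↦ hfirst z hzγ hz ▸ β.start_mem_support) id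

end Crossing

/-- `p` is a longest path of `G`. -/
def IsLongestPath {G : SimpleGraph V} {u v : V} (p : G.Walk u v) : Prop :=
  p.IsPath ∧ ∀ (u' v' : V) (q : G.Walk u' v'), q.IsPath → q.length ≤ p.length

section LongestPath

variable {G : SimpleGraph V} {u v w x y z : V}

theorem exists_isLongestPath (G : SimpleGraph V) [Nonempty V] [Finite G.edgeSet] :
    ∃ (u v : V) (p : G.Walk u v), IsLongestPath p :=
  let ⟨u, v, p, hp, hmax⟩ := Walk.exists_isPath_forall_isPath_length_le_length G
  ⟨u, v, p, hp, hmax⟩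

theorem IsLongestPath.reverse {p : G.Walk u v} (hp : IsLongestPath p) :
    IsLongestPath p.reverse :=
  ⟨hp.1.reverse, by simpa using hp.2⟩

theorem IsLongestPath.mem_support_of_adj_start {p : G.Walk u v} (hp : IsLongestPath p)
    (h : G.Adj u z) : z ∈ p.support := by
  by_contra hz
  have := hp.2 z v (.cons h.symm p) (hp.1.cons hz)
  rw [Walk.length_cons] at this
  omega

theorem IsLongestPath.mem_support_of_adj_end {p : G.Walk u v} (hp : IsLongestPath p)
    (h : G.Adj v z) : z ∈ p.support := by
  simpa using hp.reverse.mem_support_of_adj_start h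

theorem exists_isPath_length_eq_of_notMem_support (hG : G.Connected) {c : G.Walk v v}
    (hc : c.IsCycle) (hw : w ∉ c.support) :
    ∃ (x y : V) (q : G.Walk x y), q.IsPath ∧ q.length = c.length := by
  classical
  obtain ⟨p⟩ := hG.preconnected v w
  obtain ⟨d, -, hd, hd'⟩ := p.exists_boundary_dart {z | z ∈ c.support} c.start_mem_support hw
  have hrot : (c.rotate d.fst hd).IsCycle := (Walk.isCycle_rotate hd).2 hc
  refine ⟨d.snd, _, .cons d.adj.symm (c.rotate d.fst hd).dropLast,
    hrot.isPath_dropLast.cons fun h ↦ hd' ?_, ?_⟩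
  · rw [Walk.support_dropLast hrot.not_nil] at h
    exact (Walk.mem_support_rotate_iff c _ hd).1 (List.mem_of_mem_dropLast h)
  · rw [Walk.length_cons, Walk.length_dropLast_add_one hrot.not_nil, Walk.length_rotate]

theorem length_eq_card_of_forall_mem_support [Fintype V] {c : G.Walk v v} (hc : c.IsCycle)
    (h : ∀ w, w ∈ c.support) : c.length = Fintype.card V := by
  classical
  refine (Walk.isHamiltonianCycle_isCycle_and_isHamiltonian_tail.2
    ⟨hc, hc.isPath_tail.isHamiltonian_of_mem fun w ↦ ?_⟩).length_eq
  have hw := h w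
  rw [← Walk.cons_support_tail hc.not_nil, List.mem_cons] at hw
  exact hw.elim (fun hwv ↦ hwv ▸ c.tail.end_mem_support) id

theorem IsLongestPath.card_le_length [Fintype V] (hG : G.Connected) {p : G.Walk u v}
    (hp : IsLongestPath p) {c : G.Walk w w} (hc : c.IsCycle) (hpc : p.length < c.length) :
    Fintype.card V ≤ c.length := by
  refine (length_eq_card_of_forall_mem_support hc fun z ↦ ?_).ge
  by_contra hz
  obtain ⟨_, _, q, hq, hlen⟩ := exists_isPath_length_eq_of_notMem_support hG hc hz
  exact (hp.2 _ _ q hq).not_gt (hlen ▸ hpc)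

theorem IsLongestPath.exists_isCycle_of_isCrossing [Fintype V] (h : KConnected G 2)
    {p : G.Walk x y} (hp : IsLongestPath p) [Fintype (G.neighborSet x)]
    [Fintype (G.neighborSet y)] {i j : ℕ} (hc : IsCrossing p i j) :
    ∃ (v : V) (c : G.Walk v v), c.IsCycle ∧
      min (Fintype.card V) (G.degree x + G.degree y) ≤ c.length := by
  have hxp := fun z (hz : G.Adj x z) ↦ hp.mem_support_of_adj_start hz
  have hyp := fun z (hz : G.Adj y z) ↦ hp.mem_support_of_adj_end hz
  obtain ⟨i, j, hc, hmin⟩ := hc.exists_minimal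
  have hlen : 2 ≤ p.length := (h.le_degree x).trans (degree_le_length p.start_mem_support hxp)
  have hij := hc.1
  obtain hij | rfl : i + 1 < j ∨ j = i + 1 := by omega
  · have hdeg := hc.degree_add_degree_le hmin hij hxp hyp
    have := h.le_degree x
    have := h.le_degree y
    have := hc.2.1
    obtain ⟨v, c, hcyc, hclen⟩ := hc.exists_isCycle hp.1 (by omega)
    exact ⟨v, c, hcyc, (min_le_right _ _).trans (hclen ▸ hdeg)⟩
  · obtain ⟨v, c, hcyc, hclen⟩ := hc.exists_isCycle hp.1 (by omega)
    have hj := hc.2.1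
    exact ⟨v, c, hcyc, (min_le_left _ _).trans
      (hp.card_le_length (h.connected two_pos) hcyc (by omega))⟩

theorem IsLongestPath.exists_isCycle_min_card_degree_add_degree_le [Fintype V]
    (h : KConnected G 2) {p : G.Walk x y} (hp : IsLongestPath p) [Fintype (G.neighborSet x)]
    [Fintype (G.neighborSet y)] :
    ∃ (v : V) (c : G.Walk v v), c.IsCycle ∧
      min (Fintype.card V) (G.degree x + G.degree y) ≤ c.length := by
  have hxp := fun z (hz : G.Adj x z) ↦ hp.mem_support_of_adj_start hz
  have hyp := fun z (hz : G.Adj y z) ↦ hp.mem_support_of_adj_end hz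
  obtain ⟨a, ha⟩ := (G.degree_pos_iff_exists_adj x).1 (two_pos.trans_le (h.le_degree x))
  obtain ⟨b, hb⟩ := (G.degree_pos_iff_exists_adj y).1 (two_pos.trans_le (h.le_degree y))
  rcases exists_isCrossing_or_exists_append p ⟨a, hxp a ha, ha⟩ hxp ⟨b, hyp b hb, hb⟩ hyp with
    ⟨i, j, hc⟩ | ⟨a, b, α, μ, β, rfl, hxa, hyb, hxα, hyβ⟩
  · exact hp.exists_isCycle_of_isCrossing h hc
  · obtain ⟨v, c, hc, hlen⟩ := h.exists_isCycle_degree_add_degree_le hp.1 hxa hyb hxα hyβ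
    exact ⟨v, c, hc, (min_le_right _ _).trans hlen⟩

theorem length_le_circumference [Fintype V] {c : G.Walk v v} (hc : c.IsCycle) :
    c.length ≤ circumference G := by
  refine le_csSup ⟨Fintype.card V, ?_⟩ ⟨v, c, hc, rfl⟩
  rintro n ⟨w, c', hc', rfl⟩
  simpa using hc'.support_nodup.length_le_card

end LongestPath

theorem dirac_circumference (G : SimpleGraph V) [Fintype V] [DecidableRel G.Adj]
    (h2 : KConnected G 2) :
    circumference G ≥ min (Fintype.card V) (2 * G.minDegree) := by
  have : Nonempty V := Fintype.card_pos_iff.1 (two_pos.trans h2.1)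
  obtain ⟨x, y, p, hp⟩ := exists_isLongestPath G
  obtain ⟨v, c, hc, hlen⟩ := hp.exists_isCycle_min_card_degree_add_degree_le h2
  calc min (Fintype.card V) (2 * G.minDegree)
      ≤ min (Fintype.card V) (G.degree x + G.degree y) :=
        min_le_min_left _ (by linarith [G.minDegree_le_degree x, G.minDegree_le_degree y])
    _ ≤ c.length := hlen
    _ ≤ circumference G := length_le_circumference hc
end

section
/- Let G be a 3-connected graph with minimum degree δ. Then either the circumference satisfies c ≥ 3δ − 3, or every longest cycle in G is a dominating cycle. -/
open SimpleGraph

variable {V : Type*}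

/-!
Let `C` be a longest cycle, let `H` be a nontrivial component of `G - C`, and consider the vertices
of `C` with a neighbour in `H`. Any two of them are at distance at least two along `C`; if they see
two pieces of `H` that are joined through `H` by paths with at least `E` edges, they are at distance
at least `E + 2`, since the detour through `H` would otherwise give a longer cycle. So every change
from one piece to another along `C` costs `E` further edges, and 3-connectivity forces several
changes. If `H` has no cut vertex, the pieces are its single vertices, and a version of the
Erdős–Gallai lemma shows that `E` can be the second smallest degree in `H`. If `H` has a cut vertex,
the pieces are two disjoint lobes of `H` and `E` is the sum of the minimum degrees over the two
lobes.
-/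

section Reachability

/-- `a` and `b` are joined by a walk of `G` all of whose vertices lie in `S`. -/
def ReachableIn (G : SimpleGraph V) (S : Set V) (a b : V) : Prop :=
  ∃ p : G.Walk a b, ∀ x ∈ p.support, x ∈ S

/-- The subgraph of `G` spanned by `K` is connected or empty. -/
def IsConnectedOn (G : SimpleGraph V) (K : Set V) : Prop :=
  ∀ ⦃a⦄, a ∈ K → ∀ ⦃b⦄, b ∈ K → ReachableIn G K a b

/-- The vertex set of the component of `y` in the subgraph of `G` spanned by `S`
(empty if `y ∉ S`). -/
def componentIn (G : SimpleGraph V) (S : Set V) (y : V) : Set V :=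
  {a | ReachableIn G S y a}

/-- The number of neighbours of `a` in `S`; it is `0` if there are infinitely many. -/
noncomputable def degreeIn (G : SimpleGraph V) (S : Set V) (a : V) : ℕ :=
  (G.neighborSet a ∩ S).ncard

variable {G : SimpleGraph V} {S T K : Set V} {a b c y : V}

namespace ReachableIn

lemma refl (h : a ∈ S) : ReachableIn G S a a :=
  ⟨Walk.nil, by simpa using h⟩

lemma of_adj (h : G.Adj a b) (ha : a ∈ S) (hb : b ∈ S) : ReachableIn G S a b :=
  ⟨h.toWalk, by simp [ha, hb]⟩

lemma symm (h : ReachableIn G S a b) : ReachableIn G S b a := by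
  obtain ⟨p, hp⟩ := h
  exact ⟨p.reverse, by simpa using hp⟩

lemma trans (h : ReachableIn G S a b) (h' : ReachableIn G S b c) : ReachableIn G S a c := by
  obtain ⟨p, hp⟩ := h
  obtain ⟨q, hq⟩ := h'
  exact ⟨p.append q, fun x hx => ((Walk.mem_support_append_iff _ _).1 hx).elim (hp x) (hq x)⟩

lemma mono (h : ReachableIn G S a b) (hST : S ⊆ T) : ReachableIn G T a b := by
  obtain ⟨p, hp⟩ := h
  exact ⟨p, fun x hx => hST (hp x hx)⟩

lemma left_mem (h : ReachableIn G S a b) : a ∈ S := by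
  obtain ⟨p, hp⟩ := h
  exact hp _ p.start_mem_support

lemma right_mem (h : ReachableIn G S a b) : b ∈ S :=
  h.symm.left_mem

lemma exists_adj_leaving (h : ReachableIn G S a b) (ha : a ∈ K) (hb : b ∉ K) :
    ∃ x ∈ S ∩ K, ∃ y ∈ S \ K, G.Adj x y := by
  obtain ⟨p, hp⟩ := h
  obtain ⟨d, hd, hfst, hsnd⟩ := p.exists_boundary_dart K ha hb
  exact ⟨d.fst, ⟨hp _ (p.dart_fst_mem_support_of_mem_darts hd), hfst⟩,
    d.snd, ⟨hp _ (p.dart_snd_mem_support_of_mem_darts hd), hsnd⟩, d.adj⟩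

lemma of_induce {a b : S} (h : (G.induce S).Reachable a b) : ReachableIn G S a b := by
  obtain ⟨p⟩ := h
  refine ⟨p.map (Embedding.induce S).toHom, fun x hx => ?_⟩
  obtain ⟨y, -, rfl⟩ := List.mem_map.1 (p.support_map _ ▸ hx)
  exact y.2

end ReachableIn

lemma componentIn_subset : componentIn G S y ⊆ S :=
  fun _ h => h.right_mem

lemma mem_componentIn_self (hy : y ∈ S) : y ∈ componentIn G S y :=
  .refl hy

lemma mem_componentIn_of_adj (ha : a ∈ componentIn G S y) (hc : c ∈ S) (hac : G.Adj a c) :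
    c ∈ componentIn G S y :=
  ReachableIn.trans ha (.of_adj hac ha.right_mem hc)

lemma isConnectedOn_componentIn : IsConnectedOn G (componentIn G S y) := by
  classical
  have from_y : ∀ a ∈ componentIn G S y, ReachableIn G (componentIn G S y) y a := by
    rintro a ⟨p, hp⟩
    exact ⟨p, fun x hx => ⟨p.takeUntil x hx,
      fun c hc => hp c (p.support_takeUntil_subset_support hx hc)⟩⟩
  exact fun a ha b hb => (from_y a ha).symm.trans (from_y b hb)

lemma IsConnectedOn.degreeIn_pos [Finite V] (hS : IsConnectedOn G S) (ha : a ∈ S) (hb : b ∈ S)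
    (hab : a ≠ b) : 0 < degreeIn G S a := by
  obtain ⟨_, ⟨-, rfl⟩, c, hc, hac⟩ :=
    (hS ha hb).exists_adj_leaving (Set.mem_singleton a) (Ne.symm hab)
  exact (Set.ncard_pos (Set.toFinite _)).2 ⟨c, hac, hc.1⟩

lemma degreeIn_lt_ncard [Finite V] (ha : a ∈ S) : degreeIn G S a < S.ncard :=
  Set.ncard_lt_ncard ⟨Set.inter_subset_right, fun h => G.irrefl (h ha).1⟩

end Reachability

section LongPaths

/-- `a` and `b` are joined by a path of `G` inside `S` that has at least `l` edges. -/
def LongPathIn (G : SimpleGraph V) (S : Set V) (a b : V) (l : ℕ) : Prop :=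
  ∃ p : G.Walk a b, p.IsPath ∧ (∀ x ∈ p.support, x ∈ S) ∧ l ≤ p.length

variable {G : SimpleGraph V} {S T : Set V} {a b c : V} {k l : ℕ}

lemma ReachableIn.longPathIn (h : ReachableIn G S a b) : LongPathIn G S a b 0 := by
  classical
  obtain ⟨p, hp⟩ := h
  exact ⟨p.bypass, p.bypass_isPath, fun x hx => hp x (p.support_bypass_subset_support hx), by simp⟩

lemma ReachableIn.longPathIn_one (h : ReachableIn G S a b) (hab : a ≠ b) :
    LongPathIn G S a b 1 := by
  obtain ⟨p, hp, hS, -⟩ := h.longPathIn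
  exact ⟨p, hp, hS, Nat.one_le_iff_ne_zero.2 (hab ∘ Walk.eq_of_length_eq_zero)⟩

namespace LongPathIn

lemma mono (h : LongPathIn G S a b k) (hST : S ⊆ T) (hlk : l ≤ k) : LongPathIn G T a b l := by
  obtain ⟨p, hp, hS, hl⟩ := h
  exact ⟨p, hp, fun x hx => hST (hS x hx), hlk.trans hl⟩

lemma symm (h : LongPathIn G S a b k) : LongPathIn G S b a k := by
  obtain ⟨p, hp, hS, hl⟩ := h
  exact ⟨p.reverse, hp.reverse, by simpa using hS, by simpa using hl⟩

lemma append (h : LongPathIn G S a b k) (h' : LongPathIn G T b c l) (hST : S ∩ T ⊆ {b}) :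
    LongPathIn G (S ∪ T) a c (k + l) := by
  obtain ⟨p, hp, hpS, hpl⟩ := h
  obtain ⟨q, hq, hqT, hql⟩ := h'
  refine ⟨p.append q, ?_, fun x hx => ?_, by rw [Walk.length_append]; omega⟩
  · have hq' := hq.support_nodup
    rw [← Walk.cons_tail_support] at hq'
    rw [Walk.isPath_def, Walk.support_append, List.nodup_append]
    refine ⟨hp.support_nodup, hq'.of_cons, ?_⟩
    rintro x hx _ hx' rfl
    obtain rfl : x = b := hST ⟨hpS x hx, hqT x (List.mem_of_mem_tail hx')⟩
    exact (List.nodup_cons.1 hq').1 hx'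
  · exact ((Walk.mem_support_append_iff _ _).1 hx).imp (hpS x) (hqT x)

lemma cons (hab : G.Adj a b) (h : LongPathIn G S b c l) (ha : a ∉ S) :
    LongPathIn G (insert a S) a c (l + 1) := by
  obtain ⟨p, hp, hS, hl⟩ := h
  refine ⟨p.cons hab, hp.cons fun h => ha (hS a h), ?_, by simpa using hl⟩
  simpa using fun x hx => Or.inr (hS x hx)

end LongPathIn

end LongPaths

section Lobes

/-- `K` is a connected nonempty part of `S` that is separated from the rest of `S` by the single
vertex `x ∈ S`: a component of `S \ {x}`. -/
structure IsLobe (G : SimpleGraph V) (S : Set V) (x : V) (K : Set V) : Prop where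
  root_mem : x ∈ S
  subset : K ⊆ S
  root_notMem : x ∉ K
  nonempty : K.Nonempty
  closed : ∀ ⦃a⦄, a ∈ K → ∀ ⦃c⦄, c ∈ S → G.Adj a c → c ∈ insert x K
  connected : IsConnectedOn G K

/-- The subgraph of `G` spanned by `W` becomes 2-connected (or a single edge) once the edge `uv` is
added: it is connected, and no vertex `x` of `W` separates a vertex of `W` from both `u` and `v`. -/
structure IsBlockBetween (G : SimpleGraph V) (W : Set V) (u v : V) : Prop where
  ne : u ≠ v
  reachableIn : ReachableIn G W u v
  reachableIn_diff : ∀ ⦃x⦄, x ∈ W → ∀ ⦃y⦄, y ∈ W → y ≠ x →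
    ReachableIn G (W \ {x}) y u ∨ ReachableIn G (W \ {x}) y v

variable {G : SimpleGraph V} {S K : Set V} {a u v x y z : V}

lemma isLobe_componentIn (hx : x ∈ S) (hy : y ∈ S) (hyx : y ≠ x) :
    IsLobe G S x (componentIn G (S \ {x}) y) where
  root_mem := hx
  subset := componentIn_subset.trans Set.sdiff_subset
  root_notMem h := (componentIn_subset h).2 rfl
  nonempty := ⟨y, mem_componentIn_self ⟨hy, hyx⟩⟩
  closed a ha c hc hac := by
    by_cases hcx : c = x
    · exact .inl hcx
    · exact .inr (mem_componentIn_of_adj ha ⟨hc, hcx⟩ hac)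
  connected := isConnectedOn_componentIn

namespace IsLobe

lemma exists_adj_root (hL : IsLobe G S x K) (hS : IsConnectedOn G S) : ∃ a ∈ K, G.Adj a x := by
  obtain ⟨y, hy⟩ := hL.nonempty
  obtain ⟨a, ha, c, hc, hac⟩ :=
    (hS (hL.subset hy) hL.root_mem).exists_adj_leaving hy hL.root_notMem
  obtain rfl := (hL.closed ha.2 hc.1 hac).resolve_right hc.2
  exact ⟨a, ha.2, hac⟩

lemma reachableIn_diff (hL : IsLobe G S x K) (h : ReachableIn G S x y) (hy : y ∉ K) :
    ReachableIn G (S \ K) x y := by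
  by_contra hxy
  have hxS : x ∈ S \ K := ⟨hL.root_mem, hL.root_notMem⟩
  obtain ⟨a, ⟨-, ha⟩, c, ⟨hcS, hc⟩, hac⟩ := h.exists_adj_leaving
    (K := componentIn G (S \ K) x ∪ K) (.inl (mem_componentIn_self hxS)) (by simp_all [componentIn])
  rcases ha with ha | ha
  · exact hc (.inl (mem_componentIn_of_adj ha ⟨hcS, fun h => hc (.inr h)⟩ hac))
  · rcases hL.closed ha hcS hac with rfl | h
    · exact hc (.inl (mem_componentIn_self hxS))
    · exact hc (.inr h)

lemma insert_subset (hL : IsLobe G S x K) : insert x K ⊆ S :=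
  Set.insert_subset hL.root_mem hL.subset

lemma degreeIn_le [Finite V] (hL : IsLobe G S x K) (ha : a ∈ K) :
    degreeIn G S a ≤ degreeIn G (insert x K) a :=
  Set.ncard_le_ncard fun _ hc => ⟨hc.1, hL.closed ha hc.2 hc.1⟩

lemma componentIn_insert_diff (hL : IsLobe G S x K) {x' y' : V} (hx' : x' ∈ K)
    (hy' : y' ∈ insert x K) (hne : y' ≠ x') (hsep : ¬ ReachableIn G (insert x K \ {x'}) y' x) :
    IsLobe G S x' (componentIn G (insert x K \ {x'}) y') ∧
      componentIn G (insert x K \ {x'}) y' ⊂ K := by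
  have hlobe := isLobe_componentIn (G := G) (.inr hx') hy' hne
  have hsub : componentIn G (insert x K \ {x'}) y' ⊆ K := fun a ha =>
    (componentIn_subset ha).1.resolve_left fun h => hsep (h ▸ ha)
  refine ⟨?_, hsub, fun h => hlobe.root_notMem (h hx')⟩
  exact { hlobe with
    root_mem := hL.subset hx'
    subset := hsub.trans hL.subset
    closed := fun a ha c hc hac => hlobe.closed ha (hL.closed (hsub ha) hc hac) hac }

/-- A cut vertex of `insert x K` would cut a strictly smaller lobe off from `a`. -/
lemma isBlockBetween (hL : IsLobe G S x K) (ha : a ∈ K) (hadj : ∃ b ∈ K, G.Adj b x)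
    (hmin : ∀ x' ∈ K, ∀ K' ⊂ K, IsLobe G S x' K' → a ∈ K') :
    IsBlockBetween G (insert x K) a x where
  ne := fun h => hL.root_notMem (h ▸ ha)
  reachableIn := by
    obtain ⟨b, hb, hbx⟩ := hadj
    exact ((hL.connected ha hb).mono (Set.subset_insert x K)).trans
      (.of_adj hbx (.inr hb) (.inl rfl))
  reachableIn_diff := by
    intro x' hx' y' hy' hne
    rcases hx' with rfl | hx'
    · refine .inl ((hL.connected (hy'.resolve_left hne) ha).mono fun t ht => ⟨.inr ht, ?_⟩)
      rintro rfl
      exact hL.root_notMem ht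
    · refine or_iff_not_imp_right.2 fun hsep => ?_
      obtain ⟨hlobe, hlt⟩ := hL.componentIn_insert_diff hx' hy' hne hsep
      exact hmin x' hx' _ hlt hlobe

end IsLobe

end Lobes

section ErdosGallai

variable {G : SimpleGraph V} {S W K : Set V} {a u v x y z : V} {k : ℕ}

lemma IsBlockBetween.reachableIn_diff_left (hW : IsBlockBetween G W u v) (hy : y ∈ W)
    (hyu : y ≠ u) : ReachableIn G (W \ {u}) y v :=
  (hW.reachableIn_diff hW.reachableIn.left_mem hy hyu).resolve_left fun h => h.right_mem.2 rfl

lemma IsBlockBetween.isConnectedOn_diff_left (hW : IsBlockBetween G W u v) :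
    IsConnectedOn G (W \ {u}) := fun _ ha _ hb =>
  (hW.reachableIn_diff_left ha.1 ha.2).trans (hW.reachableIn_diff_left hb.1 hb.2).symm

lemma IsBlockBetween.exists_adj_left (hW : IsBlockBetween G W u v)
    (hL : IsLobe G (W \ {u}) x K) (hvK : v ∉ K) : ∃ a ∈ K, G.Adj a u := by
  obtain ⟨y, hy⟩ := hL.nonempty
  have huK : u ∉ K := fun h => (hL.subset h).2 rfl
  obtain ⟨t, ht, hyt⟩ : ∃ t, t ∉ K ∧ ReachableIn G (W \ {x}) y t := by
    rcases hW.reachableIn_diff hL.root_mem.1 (hL.subset hy).1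
      (fun h => hL.root_notMem (h ▸ hy)) with h | h
    exacts [⟨u, huK, h⟩, ⟨v, hvK, h⟩]
  obtain ⟨a, ha, c, hc, hac⟩ := hyt.exists_adj_leaving hy ht
  refine ⟨a, ha.2, ?_⟩
  by_contra hau
  have hcu : c ≠ u := fun h => hau (h ▸ hac)
  rcases hL.closed ha.2 ⟨hc.1.1, hcu⟩ hac with h | h
  exacts [hc.1.2 h, hc.2 h]

lemma IsBlockBetween.longPathIn_of_subset [Finite V] (hW : IsBlockBetween G W u v)
    (hsub : W ⊆ {u, v, z}) (huz : u ≠ z) : LongPathIn G W u v (degreeIn G W u) := by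
  have hu := hW.reachableIn.left_mem
  have hv := hW.reachableIn.right_mem
  by_cases hz : z ∈ W ∧ z ≠ v ∧ G.Adj u z
  · obtain ⟨hzW, hzv, huz'⟩ := hz
    obtain ⟨_, ⟨-, rfl⟩, c, ⟨⟨hcW, hcu⟩, hcz⟩, hac⟩ :=
      (hW.reachableIn_diff_left hzW huz.symm).exists_adj_leaving (Set.mem_singleton z) hzv.symm
    obtain rfl : c = v := by simpa [show c ≠ u from hcu, show c ≠ _ from hcz] using hsub hcW
    have hdeg : degreeIn G W u ≤ 2 := by
      refine (Set.ncard_le_ncard (t := {c, _}) fun t ht => ?_).trans (Set.ncard_pair hzv.symm).le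
      exact (hsub ht.2).resolve_left fun h => G.ne_of_adj ht.1 h.symm
    refine ((ReachableIn.of_adj (S := {c, _}) hac (.inr rfl) (.inl rfl)).longPathIn_one hzv).cons
      huz' ?_ |>.mono ?_ hdeg
    · simp [hW.ne, huz]
    · simp [Set.insert_subset_iff, hu, hv, hzW]
  · have hdeg : degreeIn G W u ≤ 1 := by
      refine (Set.ncard_le_ncard (t := {v}) fun t ht => ?_).trans (Set.ncard_singleton v).le
      rcases hsub ht.2 with h | h | rfl
      · exact absurd h.symm (G.ne_of_adj ht.1)
      · exact h
      · by_contra htv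
        exact hz ⟨ht.2, htv, ht.1⟩
    exact (hW.reachableIn.longPathIn_one hW.ne).mono subset_rfl hdeg

/-- The lobe is chosen minimal, and `u'` is chosen to be `z` whenever possible, since `{z}` is the
only lobe that minimality does not exclude. -/
lemma IsBlockBetween.exists_smaller [Finite V] (hW : IsBlockBetween G W u v)
    (hsub : ¬ W ⊆ {u, v, z}) : ∃ x K u', IsLobe G (W \ {u}) x K ∧ v ∉ K ∧ ¬ K ⊆ {z} ∧
      G.Adj u u' ∧ IsBlockBetween G (insert x K) u' x := by
  obtain ⟨y, hy, hyn⟩ := Set.not_subset.1 hsub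
  simp only [Set.mem_insert_iff, Set.mem_singleton_iff, not_or] at hyn
  have hv : v ∈ W \ {u} := ⟨hW.reachableIn.right_mem, hW.ne.symm⟩
  have hL₀ := isLobe_componentIn (G := G) hv ⟨hy, hyn.1⟩ hyn.2.1
  obtain ⟨K, ⟨⟨x, hL⟩, hvK, hKz⟩, hmin⟩ := exists_minimal_of_wellFoundedLT
    (fun K => (∃ x, IsLobe G (W \ {u}) x K) ∧ v ∉ K ∧ ¬ K ⊆ {z})
    ⟨_, ⟨v, hL₀⟩, hL₀.root_notMem,
      fun h => hyn.2.2 (h (mem_componentIn_self ⟨⟨hy, hyn.1⟩, hyn.2.1⟩))⟩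
  obtain ⟨u', hu'K, hu'u, hu'z⟩ : ∃ u' ∈ K, G.Adj u' u ∧ (z ∈ K → G.Adj z u → u' = z) := by
    by_cases hz : z ∈ K ∧ G.Adj z u
    · exact ⟨z, hz.1, hz.2, fun _ _ => rfl⟩
    · obtain ⟨a, ha, hau⟩ := hW.exists_adj_left hL hvK
      exact ⟨a, ha, hau, fun h1 h2 => absurd ⟨h1, h2⟩ hz⟩
  refine ⟨x, K, u', hL, hvK, hKz, hu'u.symm,
    hL.isBlockBetween hu'K (hL.exists_adj_root hW.isConnectedOn_diff_left) ?_⟩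
  intro x' _ K' hlt hL'
  have hvK' : v ∉ K' := fun h => hvK (hlt.subset h)
  have hK'z : K' ⊆ {z} := by
    by_contra h
    exact hlt.not_subset (hmin ⟨⟨x', hL'⟩, hvK', h⟩ hlt.subset)
  obtain ⟨a, ha, hau⟩ := hW.exists_adj_left hL' hvK'
  obtain rfl : a = z := hK'z ha
  exact hu'z (hlt.subset ha) hau ▸ ha

/-- The Erdős–Gallai lemma, with one vertex `z` exempt from the degree condition. A step of the
induction moves from `u` to a neighbour in a lobe of `W \ {u}`, where degrees drop by at most
one. -/
lemma IsBlockBetween.longPathIn [Finite V] (hW : IsBlockBetween G W u v)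
    (hdeg : ∀ y ∈ W, y ≠ v → y ≠ z → k ≤ degreeIn G W y) (hne : ∃ y ∈ W, y ≠ v ∧ y ≠ z) :
    LongPathIn G W u v k := by
  induction W using WellFoundedLT.induction generalizing u v k with | ind W ih
  by_cases hsub : W ⊆ {u, v, z}
  · obtain ⟨y, hy, hyv, hyz⟩ := hne
    obtain rfl : y = u := by simpa [hyv, hyz] using hsub hy
    exact (hW.longPathIn_of_subset hsub hyz).mono subset_rfl (hdeg y hy hyv hyz)
  obtain ⟨x, K, u', hL, hvK, hKz, huu', hblock⟩ := hW.exists_smaller hsub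
  have hu := hW.reachableIn.left_mem
  have hxu : x ≠ u := hL.root_mem.2
  have huK : u ∉ insert x K := fun h => h.elim (hxu ∘ Eq.symm) fun h => (hL.subset h).2 rfl
  have hKW : insert x K ⊆ W := hL.insert_subset.trans Set.sdiff_subset
  have hinner : LongPathIn G (insert x K) u' x (k - 1) := by
    refine ih _ (hKW.ssubset_of_mem_notMem hu huK) hblock ?_ ?_
    · intro y hy hyx hyz
      have hyK := hy.resolve_left hyx
      have hle : degreeIn G W y ≤ degreeIn G (W \ {u}) y + 1 := by
        unfold degreeIn
        rw [← Set.inter_sdiff_assoc, ← Set.ncard_singleton u]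
        exact Set.ncard_le_ncard_sdiff_add_ncard _ _
      have := hL.degreeIn_le hyK
      have := hdeg y (hKW hy) (fun h => hvK (h ▸ hyK)) hyz
      omega
    · obtain ⟨y, hyK, hyz⟩ := Set.not_subset.1 hKz
      exact ⟨y, .inr hyK, fun h => hL.root_notMem (h ▸ hyK), hyz⟩
  have houter : LongPathIn G ((W \ {u}) \ K) x v 0 :=
    (hL.reachableIn_diff (hW.reachableIn_diff_left hL.root_mem.1 hxu) hvK).longPathIn
  refine ((hinner.cons huu' huK).append houter ?_).mono ?_ (by omega)
  · rintro t ⟨rfl | rfl | ht, ht'⟩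
    exacts [absurd rfl ht'.1.2, rfl, absurd ht ht'.2]
  · exact Set.union_subset (Set.insert_subset hu hKW)
      (Set.sdiff_subset.trans Set.sdiff_subset)

/-- A minimal lobe inside `K₀` has no cut vertex, so the Erdős–Gallai lemma applies to it. -/
lemma IsLobe.exists_longPathIn_root [Finite V] {x₀ : V} {K₀ : Set V} (hL₀ : IsLobe G S x₀ K₀)
    (hS : IsConnectedOn G S) : ∃ x K w, IsLobe G S x K ∧ K ⊆ K₀ ∧ x ∈ insert x₀ K₀ ∧ w ∈ K ∧
      ∀ a ∈ K, LongPathIn G (insert x K) a x (degreeIn G S w) := by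
  obtain ⟨K, hKK₀, ⟨x, hL⟩, hmin⟩ := exists_minimal_le_of_wellFoundedLT
    (fun K => ∃ x, IsLobe G S x K) K₀ ⟨x₀, hL₀⟩
  obtain ⟨w, hw, hwmin⟩ := K.toFinite.exists_minimalFor (degreeIn G S) K hL.nonempty
  obtain ⟨b, hb, hbx⟩ := hL.exists_adj_root hS
  refine ⟨x, K, w, hL, hKK₀, hL₀.closed (hKK₀ hb) hL.root_mem hbx, hw, fun a ha => ?_⟩
  have hblock : IsBlockBetween G (insert x K) a x :=
    hL.isBlockBetween ha ⟨b, hb, hbx⟩ fun x' _ K' hlt hL' =>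
      absurd (hmin ⟨x', hL'⟩ hlt.subset) hlt.not_subset
  refine hblock.longPathIn (z := x) (fun y hy hyx _ => ?_) ⟨a, .inr ha, hblock.ne, hblock.ne⟩
  have hyK := hy.resolve_left hyx
  exact ((le_total _ _).elim id (hwmin hyK)).trans (hL.degreeIn_le hyK)

lemma IsLobe.longPathIn_of_disjoint {x₁ x₂ b : V} {K₁ K₂ : Set V} {l : ℕ}
    (h₁ : IsLobe G S x₁ K₁) (hS : IsConnectedOn G S) (h₂ : IsLobe G S x₂ K₂) (hx₁ : x₁ ∉ K₂)
    (hx₂ : x₂ ∉ K₁) (hdisj : Disjoint K₁ K₂) (hp₁ : LongPathIn G (insert x₁ K₁) a x₁ k)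
    (hp₂ : LongPathIn G (insert x₂ K₂) b x₂ l) : LongPathIn G S a b (k + l) := by
  have h₂' : IsLobe G (S \ K₁) x₂ K₂ :=
    { h₂ with
      root_mem := ⟨h₂.root_mem, hx₂⟩
      subset := Set.subset_sdiff.2 ⟨h₂.subset, hdisj.symm⟩
      closed := fun a ha c hc hac => h₂.closed ha hc.1 hac }
  have hmid : ReachableIn G ((S \ K₁) \ K₂) x₁ x₂ :=
    (h₂'.reachableIn_diff (h₁.reachableIn_diff (hS h₁.root_mem h₂.root_mem) hx₂).symm hx₁).symm
  refine ((hp₁.append hmid.longPathIn ?_).append hp₂.symm ?_).mono ?_ le_rfl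
  · rintro t ⟨rfl | ht, ht'⟩
    exacts [rfl, absurd ht ht'.1.2]
  · rintro t ⟨(rfl | ht) | ht, rfl | ht'⟩
    exacts [rfl, absurd ht' hx₁, rfl, absurd ht' (hdisj.notMem_of_mem_left ht), rfl,
      absurd ht' ht.2]
  · exact Set.union_subset (Set.union_subset h₁.insert_subset
      (Set.sdiff_subset.trans Set.sdiff_subset)) h₂.insert_subset

lemma IsConnectedOn.exists_two_lobes [Finite V] (hS : IsConnectedOn G S) {y y' : V} (hx : x ∈ S)
    (hy : y ∈ S) (hy' : y' ∈ S) (hyx : y ≠ x) (hyx' : y' ≠ x)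
    (hsep : ¬ ReachableIn G (S \ {x}) y y') :
    ∃ x₁ K₁ w₁ x₂ K₂ w₂, IsLobe G S x₁ K₁ ∧ IsLobe G S x₂ K₂ ∧ w₁ ∈ K₁ ∧ w₂ ∈ K₂ ∧
      ∀ a ∈ K₁, ∀ b ∈ K₂, LongPathIn G S a b (degreeIn G S w₁ + degreeIn G S w₂) := by
  obtain ⟨x₁, K₁, w₁, h₁, hK₁, hx₁, hw₁, hp₁⟩ :=
    (isLobe_componentIn (G := G) hx hy hyx).exists_longPathIn_root hS
  obtain ⟨x₂, K₂, w₂, h₂, hK₂, hx₂, hw₂, hp₂⟩ :=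
    (isLobe_componentIn (G := G) hx hy' hyx').exists_longPathIn_root hS
  have hdisj : Disjoint (componentIn G (S \ {x}) y) (componentIn G (S \ {x}) y') :=
    Set.disjoint_left.2 fun _ h h' => hsep (h.trans h'.symm)
  have hx₁K₂ : x₁ ∉ K₂ := fun h => hx₁.elim (componentIn_subset (hK₂ h)).2
    (hdisj.notMem_of_mem_right (hK₂ h))
  have hx₂K₁ : x₂ ∉ K₁ := fun h => hx₂.elim (componentIn_subset (hK₁ h)).2
    (hdisj.notMem_of_mem_left (hK₁ h))
  exact ⟨x₁, K₁, w₁, x₂, K₂, w₂, h₁, h₂, hw₁, hw₂, fun a ha b hb =>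
    h₁.longPathIn_of_disjoint hS h₂ hx₁K₂ hx₂K₁ (hdisj.mono hK₁ hK₂) (hp₁ a ha) (hp₂ b hb)⟩

lemma IsConnectedOn.exists_pairwise_longPathIn [Finite V] (hS : IsConnectedOn G S)
    (hcut : ∀ x ∈ S, IsConnectedOn G (S \ {x})) (hnt : S.Nontrivial) :
    ∃ z ∈ S, ∃ w ∈ S, z ≠ w ∧ degreeIn G S z ≤ degreeIn G S w ∧
      S.Pairwise fun u v => LongPathIn G S u v (degreeIn G S w) := by
  obtain ⟨z, hz, hzmin⟩ := S.exists_min_image (degreeIn G S) S.toFinite hnt.nonempty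
  obtain ⟨w, ⟨hw, hwz⟩, hwmin⟩ :=
    (S \ {z}).exists_min_image (degreeIn G S) (Set.toFinite _) (hnt.exists_ne z)
  refine ⟨z, hz, w, hw, Ne.symm hwz, hzmin w hw, fun u hu v hv huv => ?_⟩
  have hblock : IsBlockBetween G S u v :=
    { ne := huv
      reachableIn := hS hu hv
      reachableIn_diff := fun x hx y hy hyx => by
        by_cases hux : u = x
        · exact .inr (hcut x hx ⟨hy, hyx⟩ ⟨hv, fun h => huv (hux.trans h.symm)⟩)
        · exact .inl (hcut x hx ⟨hy, hyx⟩ ⟨hu, hux⟩) }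
  by_cases hne : ∃ y ∈ S, y ≠ v ∧ y ≠ z
  · exact hblock.longPathIn (fun y hy _ hyz => hwmin y ⟨hy, hyz⟩) hne
  · have hSvz : S ⊆ {v, z} := fun y hy => by
      by_contra h
      exact hne ⟨y, hy, not_or.1 h⟩
    have hcard := (Set.ncard_le_ncard hSvz).trans (Set.ncard_insert_le v {z})
    rw [Set.ncard_singleton] at hcard
    have := degreeIn_lt_ncard (G := G) hw
    exact ((hS hu hv).longPathIn_one huv).mono subset_rfl (by omega)

end ErdosGallai

section LabelSequences

variable {L : Type*}

/-- The positions `i < q` of a sequence `M` of label sets at which two distinct labels occur, one in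
`M i` and the other in `M (i + 1)`. -/
noncomputable def labelChanges (M : ℕ → Set L) (q : ℕ) : Finset ℕ :=
  open scoped Classical in {i ∈ Finset.range q | ∃ a ∈ M i, ∃ b ∈ M (i + 1), a ≠ b}

variable {M : ℕ → Set L} {E i n q : ℕ} {a b : L}

lemma mem_labelChanges :
    i ∈ labelChanges M q ↔ i < q ∧ ∃ a ∈ M i, ∃ b ∈ M (i + 1), a ≠ b := by
  simp [labelChanges]

lemma mem_labelChanges_of_ne (hi : i < q) (hne : (M (i + 1)).Nonempty) (ha : a ∈ M i)
    (hb : b ∈ M i) (hab : a ≠ b) : i ∈ labelChanges M q := by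
  obtain ⟨c, hc⟩ := hne
  rcases eq_or_ne a c with rfl | hac
  · exact mem_labelChanges.2 ⟨hi, b, hb, a, hc, hab.symm⟩
  · exact mem_labelChanges.2 ⟨hi, a, ha, c, hc, hac⟩

lemma eq_singleton_of_notMem_labelChanges (hi : i < q) (hne : (M (i + 1)).Nonempty)
    (ha : a ∈ M i) (hiF : i ∉ labelChanges M q) : M i = {a} ∧ M (i + 1) = {a} := by
  have heq : ∀ c ∈ M i, ∀ b ∈ M (i + 1), c = b := by
    intro c hc b hb
    by_contra hcb
    exact hiF (mem_labelChanges.2 ⟨hi, c, hc, b, hb, hcb⟩)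
  have hnext : M (i + 1) = {a} := Set.eq_singleton_iff_nonempty_unique_mem.2
    ⟨hne, fun b hb => (heq a ha b hb).symm⟩
  exact ⟨Set.eq_singleton_iff_unique_mem.2 ⟨ha, fun c hc => heq c hc a (hnext ▸ rfl)⟩, hnext⟩

lemma eq_singleton_of_labelChanges_ne (hM : M q = M 0) (hne : ∀ i ≤ q, (M i).Nonempty) (hi : i ≤ q)
    (hMi : M i = {a}) (hF : ∀ j ∈ labelChanges M q, M j ≠ {a}) : ∀ j ≤ q, M j = {a} := by
  have propagate : ∀ i, M i = {a} → ∀ j, i ≤ j → j ≤ q → M j = {a} := by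
    intro i hMi j hij
    induction j, hij using Nat.le_induction with
    | base => exact fun _ => hMi
    | succ j _ ih =>
      intro hj
      have hMj := ih (by omega)
      exact (eq_singleton_of_notMem_labelChanges hj (hne _ hj) (hMj ▸ rfl) fun h => hF j h hMj).2
  exact fun j hj => propagate 0 (hM ▸ propagate i hMi q hi le_rfl) j j.zero_le hj

/-- A label change at which only one label occurs is charged to that label, any other label change
to its position. A label that is never charged cannot be left or entered without a charged
position in between, so it would be the only label all around the cycle. -/
lemma exists_label_cover (hM : M q = M 0) (hne : ∀ i ≤ q, (M i).Nonempty) :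
    ∃ (P : Finset ℕ) (Q : Finset L), P.card + Q.card ≤ max 1 (labelChanges M q).card ∧
      ∀ i < q, ∀ a ∈ M i, i ∈ P ∨ a ∈ Q := by
  classical
  rcases (labelChanges M q).eq_empty_or_nonempty with hF | ⟨f, hf⟩
  · obtain ⟨a, ha⟩ := hne 0 q.zero_le
    refine ⟨∅, {a}, by simp, fun i hi b hb => .inr ?_⟩
    have hM0 : M 0 = {a} := (eq_singleton_of_notMem_labelChanges (i := 0) (q := q) (by omega)
      (hne 1 (by omega)) ha (by simp [hF])).1
    rw [eq_singleton_of_labelChanges_ne hM hne q.zero_le hM0 (by simp [hF]) i hi.le] at hb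
    simpa using hb
  have : Nonempty L := (hne 0 q.zero_le).to_type
  choose! g hg using hne
  let P := {i ∈ labelChanges M q | M i ≠ {g i}}
  let R := {i ∈ labelChanges M q | ¬ M i ≠ {g i}}
  have hPR : P.card + R.card = (labelChanges M q).card := Finset.card_filter_add_card_filter_not _
  have hR : (R.image g).card ≤ R.card := Finset.card_image_le
  refine ⟨P, R.image g, by omega, fun i hi a ha => ?_⟩
  by_contra! ⟨hP, hQ⟩
  have eq_label : ∀ j ≤ q, M j = {a} → g j = a := fun j hj hMj => by
    simpa [hMj] using hg j hj
  have hF : ∀ j ∈ labelChanges M q, M j ≠ {a} := by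
    intro j hj hMj
    have hgj := eq_label j (mem_labelChanges.1 hj).1.le hMj
    exact hQ (Finset.mem_image.2 ⟨j, Finset.mem_filter.2 ⟨hj, by simp [hgj, hMj]⟩, hgj⟩)
  have hMi : M i = {a} := by
    by_cases hiF : i ∈ labelChanges M q
    · have hMi : M i = {g i} := by_contra fun h => hP (Finset.mem_filter.2 ⟨hiF, h⟩)
      rw [hMi] at ha ⊢
      rw [ha]
    · exact (eq_singleton_of_notMem_labelChanges hi ⟨_, hg _ hi⟩ ha hiF).1
  exact hF f hf (eq_singleton_of_labelChanges_ne hM (fun j hj => ⟨_, hg j hj⟩) hi.le hMi hF f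
    (mem_labelChanges.1 hf).1.le)

lemma add_mul_card_labelChanges_le {p : ℕ → ℕ} (hgap : ∀ i < q, p i + 2 ≤ p (i + 1))
    (hcross : ∀ i < q, ∀ a ∈ M i, ∀ b ∈ M (i + 1), a ≠ b → p i + E + 2 ≤ p (i + 1)) :
    p 0 + 2 * q + E * (labelChanges M q).card ≤ p q := by
  induction q with
  | zero => simp [labelChanges]
  | succ q ih =>
    have ih := ih (fun i hi => hgap i (by omega)) fun i hi => hcross i (by omega)
    by_cases hq : ∃ a ∈ M q, ∃ b ∈ M (q + 1), a ≠ b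
    · have hcard : (labelChanges M (q + 1)).card = (labelChanges M q).card + 1 := by
        simp [labelChanges, Finset.range_add_one, Finset.filter_insert, hq]
      obtain ⟨a, ha, b, hb, hab⟩ := hq
      have := hcross q (by omega) a ha b hb hab
      rw [hcard, Nat.mul_succ E]
      omega
    · have hcard : labelChanges M (q + 1) = labelChanges M q := by
        simp [labelChanges, Finset.range_add_one, Finset.filter_insert, hq]
      have := hgap q (by omega)
      rw [hcard]
      omega

/-- The label classes `A l` are placed around a cycle of length `n` with `t` label changes, each of
which uses up `E` further edges: the classes overlap pairwise in at most `t` points, the cycle has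
two edges for each labelled point and `E` edges for each label change, and `max 1 t` points and
labels cover all incidences. -/
structure IsSpreadWith {X : Type*} (A : L → Set X) (E t n : ℕ) : Prop where
  ncard_inter_le : ∀ ⦃c d⦄, c ≠ d → (A c ∩ A d).ncard ≤ t
  le_length : 2 * (⋃ l, A l).ncard + E * t ≤ n
  exists_cover : ∃ (P : Finset X) (Q : Finset L), P.card + Q.card ≤ max 1 t ∧
    ∀ l, ∀ x ∈ A l, x ∈ P ∨ l ∈ Q

lemma IsSpreadWith.add_le {X : Type*} [Finite X] {A : L → Set X} {t : ℕ}
    (hA : IsSpreadWith A E t n) (c d : L) :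
    2 * ((A c).ncard + (A d).ncard) + E * t ≤ n + 2 * (A c ∩ A d).ncard := by
  have h1 := Set.ncard_union_add_ncard_inter (A c) (A d)
  have h2 : (A c ∪ A d).ncard ≤ (⋃ l, A l).ncard := Set.ncard_le_ncard
    (Set.union_subset (Set.subset_iUnion A c) (Set.subset_iUnion A d))
  have := hA.le_length
  omega

lemma IsSpreadWith.two_le {X : Type*} {A : L → Set X} {t : ℕ} (hA : IsSpreadWith A E t n)
    {c d : L} (hcd : c ≠ d) (hc : (A c).Nontrivial) (hd : (A d).Nontrivial) : 2 ≤ t := by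
  obtain ⟨P, Q, hPQ, hcover⟩ := hA.exists_cover
  have mem_Q : P.card ≤ 1 → ∀ l, (A l).Nontrivial → l ∈ Q := by
    rintro hP l ⟨x, hx, y, hy, hxy⟩
    by_contra hl
    exact hxy (Finset.card_le_one.1 hP x ((hcover l x hx).resolve_right hl)
      y ((hcover l y hy).resolve_right hl))
  by_contra! ht
  have hQ : 1 < Q.card :=
    Finset.one_lt_card.2 ⟨c, mem_Q (by omega) c hc, d, mem_Q (by omega) d hd, hcd⟩
  omega

lemma exists_nat_enumeration {A : ℕ → Prop} (h0 : A 0) (hn : A n) :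
    ∃ (q : ℕ) (p : ℕ → ℕ), StrictMono p ∧ p 0 = 0 ∧ p q = n ∧ (∀ i ≤ q, A (p i)) ∧
      ∀ j < n, A j → ∃ i < q, p i = j := by
  classical
  let B : ℕ → Prop := fun j => A j ∨ n ≤ j
  have hB : {j | B j}.Infinite := (Set.Ici_infinite n).mono fun j hj => .inr hj
  have hmono : StrictMono (Nat.nth B) := Nat.nth_strictMono hB
  have hpq : Nat.nth B (Nat.count B n) = n := Nat.nth_count (.inl hn)
  refine ⟨Nat.count B n, Nat.nth B, hmono, Nat.nth_zero_of_zero (.inl h0), hpq, fun i hi => ?_,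
    fun j hj hAj => ⟨Nat.count B j, ?_, Nat.nth_count (.inl hAj)⟩⟩
  · refine (Nat.nth_mem_of_infinite hB i).elim id fun h => ?_
    rwa [le_antisymm (hpq ▸ hmono.monotone hi) h]
  · exact Nat.count_strict_mono (.inl hAj) hj

lemma isSpreadWith_of_enumeration {X : Type*} {A : L → Set X} {g : ℕ → X} {p : ℕ → ℕ}
    (hpq : p q ≤ p 0 + n) (hg : g q = g 0) (hne : ∀ i ≤ q, ∃ l, g i ∈ A l)
    (hsurj : ∀ l, ∀ x ∈ A l, ∃ i < q, g i = x)
    (hgap : ∀ i < q, ∀ a, g i ∈ A a → ∀ b, g (i + 1) ∈ A b →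
      p i + 2 ≤ p (i + 1) ∧ (a ≠ b → p i + E + 2 ≤ p (i + 1))) :
    IsSpreadWith A E (labelChanges (fun i => {l | g i ∈ A l}) q).card n where
  ncard_inter_le c d hcd := by
    rw [← Set.ncard_coe_finset]
    refine (Set.ncard_le_ncard ?_ (Set.toFinite _)).trans (Set.ncard_image_le (f := g))
    rintro x ⟨hc, hd⟩
    obtain ⟨i, hi, rfl⟩ := hsurj c x hc
    exact ⟨i, mem_labelChanges_of_ne hi (hne _ hi) hc hd hcd, rfl⟩
  le_length := by
    have hcard : (⋃ l, A l).ncard ≤ q := by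
      rw [← Finset.card_range q, ← Set.ncard_coe_finset]
      refine (Set.ncard_le_ncard ?_ (Set.toFinite _)).trans (Set.ncard_image_le (f := g))
      refine Set.iUnion_subset fun l x hx => ?_
      obtain ⟨i, hi, rfl⟩ := hsurj l x hx
      exact ⟨i, Finset.mem_coe.2 (Finset.mem_range.2 hi), rfl⟩
    have hstep : ∀ i < q, p i + 2 ≤ p (i + 1) := fun i hi =>
      (hgap i hi _ (hne i hi.le).choose_spec _ (hne (i + 1) hi).choose_spec).1
    have hsum := add_mul_card_labelChanges_le hstep
      (M := fun i => {l | g i ∈ A l}) fun i hi a ha b hb => (hgap i hi a ha b hb).2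
    omega
  exists_cover := by
    classical
    obtain ⟨P, Q, hPQ, hcover⟩ := exists_label_cover (M := fun i => {l | g i ∈ A l}) (q := q)
      (by simp only [hg]) hne
    refine ⟨P.image g, Q, (Nat.add_le_add_right Finset.card_image_le _).trans hPQ, fun l x hx => ?_⟩
    obtain ⟨i, hi, rfl⟩ := hsurj l x hx
    exact (hcover i hi l hx).imp_left (Finset.mem_image_of_mem g)

lemma exists_isSpreadWith {X : Type*} {A : L → Set X} {f : ℕ → X} (hf : f n = f 0)
    (hsurj : ∀ l, ∀ x ∈ A l, ∃ j < n, f j = x) (h0 : ∃ l, f 0 ∈ A l)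
    (h1 : ∃ i, 0 < i ∧ i < n ∧ ∃ l, f i ∈ A l)
    (hgap : ∀ i j, i < j → j ≤ n → j < i + n → ∀ a, f i ∈ A a → ∀ b, f j ∈ A b →
      i + 2 ≤ j ∧ (a ≠ b → i + E + 2 ≤ j)) : ∃ t, IsSpreadWith A E t n := by
  obtain ⟨q, p, hmono, hp0, hpq, hpA, hpsurj⟩ :=
    exists_nat_enumeration (A := fun i => ∃ l, f i ∈ A l) h0 (hf ▸ h0)
  have hle : ∀ i < q, p (i + 1) ≤ n := fun i hi => hpq ▸ hmono.monotone hi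
  have hlt : ∀ i < q, p (i + 1) < p i + n := by
    obtain ⟨j, hj0, hjn, hj⟩ := h1
    obtain ⟨k, -, rfl⟩ := hpsurj j hjn hj
    have hk : 0 < k := hmono.lt_iff_lt.1 (hp0.symm ▸ hj0)
    intro i hi
    rcases i.eq_zero_or_pos with rfl | hi0
    · have := hmono.monotone (show 0 + 1 ≤ k from hk)
      omega
    · have := hmono hi0
      have := hle i hi
      omega
  refine ⟨_, isSpreadWith_of_enumeration (g := fun i => f (p i)) (p := p) (by omega)
    (by simp only [hpq, hp0, hf]) hpA (fun l x hx => ?_) fun i hi =>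
      hgap _ _ (hmono i.lt_succ_self) (hle i hi) (hlt i hi)⟩
  obtain ⟨j, hj, rfl⟩ := hsurj l x hx
  obtain ⟨i, hi, rfl⟩ := hpsurj j hj ⟨l, hx⟩
  exact ⟨i, hi, rfl⟩

end LabelSequences

section Cycles

variable {G : SimpleGraph V} {S H : Set V} {a b v : V} {k l : ℕ} {w : G.Walk v v}

lemma LongPathIn.exists_isCycle (h : LongPathIn G S a b k) (hk : 2 ≤ k) (hba : G.Adj b a) :
    ∃ c : G.Walk b b, c.IsCycle ∧ k + 1 ≤ c.length := by
  obtain ⟨p, hp, -, hl⟩ := h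
  refine ⟨p.cons hba, Walk.isCycle_iff_isPath_tail_and_le_length.2 ⟨?_, ?_⟩, ?_⟩
  · simpa using hp
  · simp only [Walk.length_cons]; omega
  · simpa using hl

lemma longPathIn_getVert_of_isCycle (hw : w.IsCycle) {i j : ℕ} (hij : i < j) (hj : j ≤ w.length)
    (hji : j < i + w.length) :
    LongPathIn G {c | c ∈ w.support} (w.getVert j) (w.getVert i) (w.length - (j - i)) := by
  have htake : LongPathIn G {c | c ∈ (w.take i).support} v (w.getVert i) i :=
    ⟨w.take i, hw.isPath_take (hij.trans_le hj), fun _ => id, by simp; omega⟩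
  have hdrop : LongPathIn G {c | c ∈ (w.drop j).support} (w.getVert j) v (w.length - j) :=
    ⟨w.drop j, hw.isPath_drop (by omega), fun _ => id, by simp⟩
  refine (hdrop.append htake ?_).mono ?_ (by omega)
  · rintro x ⟨hx, hx'⟩
    obtain ⟨m, rfl, hm⟩ := Walk.mem_support_iff_exists_getVert.1 hx
    obtain ⟨m', hmm', hm'⟩ := Walk.mem_support_iff_exists_getVert.1 hx'
    simp only [Walk.drop_getVert, Walk.take_getVert, Walk.take_length, Walk.drop_length] at *
    by_contra hne
    have h1 : j + m ≠ w.length := fun h => hne (by simp [h])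
    have := hw.getVert_injOn' (show min i m' ≤ w.length - 1 by omega)
      (show j + m ≤ w.length - 1 by omega) hmm'
    omega
  · exact Set.union_subset (w.isSubwalk_drop j).support_subset (w.isSubwalk_take i).support_subset

lemma three_le_ncard_support_of_isCycle [Finite V] (hw : w.IsCycle) :
    3 ≤ {c | c ∈ w.support}.ncard := by
  classical
  have hcard : w.support.tail.toFinset.card = w.length := by
    rw [List.toFinset_card_of_nodup hw.support_nodup, List.length_tail, Walk.length_support,
      Nat.add_sub_cancel]
  refine hw.three_le_length.trans (hcard ▸ Set.ncard_coe_finset _ ▸ Set.ncard_le_ncard ?_)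
  exact fun c hc => List.mem_of_mem_tail (List.mem_toFinset.1 hc)

lemma IsLongestCycle.add_two_le (hw : IsLongestCycle w) (hH : Disjoint H {c | c ∈ w.support})
    {i j : ℕ} (hij : i < j) (hj : j ≤ w.length) (hji : j < i + w.length)
    (hia : G.Adj (w.getVert i) a) (hjb : G.Adj (w.getVert j) b) (h : LongPathIn G H a b l) :
    i + l + 2 ≤ j := by
  have hi : w.getVert i ∉ H := hH.notMem_of_mem_right (w.getVert_mem_support i)
  have harc := longPathIn_getVert_of_isCycle hw.1 hij hj hji
  obtain ⟨c, hc, hlen⟩ := (harc.append (h.cons hia hi) (by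
    rintro x ⟨hx, rfl | hx'⟩
    exacts [rfl, absurd hx (hH.notMem_of_mem_left hx')])).exists_isCycle (by omega) hjb.symm
  have := hw.2 b c hc
  omega

lemma IsLongestCycle.rotate (hw : IsLongestCycle w) [DecidableEq V] {u : V} (hu : u ∈ w.support) :
    IsLongestCycle (w.rotate u hu) :=
  ⟨hw.1.rotate hu, fun x w' hw' => (hw.2 x w' hw').trans_eq (w.length_rotate u hu).symm⟩

lemma IsLongestCycle.length_eq_circumference [Fintype V] (hw : IsLongestCycle w) :
    w.length = circumference G :=
  (show IsGreatest {n | ∃ (u : V) (c : G.Walk u u), c.IsCycle ∧ c.length = n} w.length from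
    ⟨⟨v, w, hw.1, rfl⟩, by rintro _ ⟨u, c, hc, rfl⟩; exact hw.2 u c hc⟩).csSup_eq.symm

end Cycles

section Attachments

/-- The vertices of `C` that have a neighbour in `K`. -/
def attachments (G : SimpleGraph V) (C K : Set V) : Set V :=
  {c ∈ C | ∃ a ∈ K, G.Adj c a}

/-- `H` spans a component (or is empty) of the graph obtained from `G` by deleting `C`. -/
structure IsComponentOff (G : SimpleGraph V) (C H : Set V) : Prop where
  disjoint : Disjoint H C
  closed : ∀ ⦃a⦄, a ∈ H → ∀ ⦃c⦄, c ∉ C → G.Adj a c → c ∈ H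
  connected : IsConnectedOn G H

variable {G : SimpleGraph V} {C H K T : Set V} {a b u v x : V} {k : ℕ}

lemma isComponentOff_componentIn : IsComponentOff G C (componentIn G Cᶜ x) where
  disjoint := Set.subset_compl_iff_disjoint_right.1 componentIn_subset
  closed _ ha _ hc hac := mem_componentIn_of_adj ha hc hac
  connected := isConnectedOn_componentIn

lemma IsComponentOff.degree_le [Fintype V] [DecidableRel G.Adj] (hH : IsComponentOff G C H)
    (hK : K ⊆ H) (ha : a ∈ K) : G.degree a ≤ (attachments G C K).ncard + degreeIn G H a := by
  have hsub : G.neighborSet a ⊆ attachments G C K ∪ (G.neighborSet a ∩ H) := fun c hac => by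
    by_cases hc : c ∈ C
    · exact .inl ⟨hc, a, ha, hac.symm⟩
    · exact .inr ⟨hac, hH.closed (hK ha) hc hac⟩
  rw [← G.card_neighborFinset_eq_degree, ← Set.ncard_coe_finset, G.coe_neighborFinset]
  exact (Set.ncard_le_ncard hsub).trans (Set.ncard_union_le _ _)

lemma KConnected.exists_adj [Fintype V] (h : KConnected G k) (hT : T.ncard < k)
    (ha : a ∈ K \ T) (hb : b ∉ K ∪ T) : ∃ x ∈ K \ T, ∃ y ∉ K ∪ T, G.Adj x y := by
  classical
  obtain ⟨hbK, hbT⟩ := not_or.1 hb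
  have hconn := h.2 T.toFinset (by rwa [← Set.ncard_eq_toFinset_card'])
  rw [Set.coe_toFinset] at hconn
  obtain ⟨x, hx, y, hy, hxy⟩ := (ReachableIn.of_induce
    (hconn.preconnected ⟨a, ha.2⟩ ⟨b, hbT⟩)).exists_adj_leaving ha.1 hbK
  exact ⟨x, ⟨hx.2, hx.1⟩, y, not_or.2 ⟨hy.2, hy.1⟩, hxy⟩

lemma IsComponentOff.exists_attachment [Fintype V] (hH : IsComponentOff G C H)
    (hG : KConnected G k) (hT : T.ncard < k) (hC : k ≤ C.ncard) (hK : K ⊆ H) (ha : a ∈ K \ T)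
    (hKT : ∀ a ∈ K, ∀ c ∈ H, G.Adj a c → c ∈ K ∪ T) : (attachments G C (K \ T) \ T).Nonempty := by
  obtain ⟨b, hbC, hbT⟩ := Set.exists_mem_notMem_of_ncard_lt_ncard (hT.trans_le hC)
  obtain ⟨y, hy, c, hc, hyc⟩ := hG.exists_adj hT ha
    (not_or.2 ⟨fun h => hH.disjoint.notMem_of_mem_right hbC (hK h), hbT⟩)
  have hcC : c ∈ C := by
    by_contra hcC
    exact hc (hKT y hy.1 c (hH.closed (hK hy.1) hcC hyc) hyc)
  exact ⟨c, ⟨hcC, y, hy, hyc.symm⟩, fun h => hc (.inr h)⟩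

lemma attachments_mono (h : K ⊆ H) : attachments G C K ⊆ attachments G C H :=
  fun _ ⟨hc, a, ha, hca⟩ => ⟨hc, a, h ha, hca⟩

lemma IsComponentOff.nontrivial_attachments [Fintype V] (hH : IsComponentOff G C H)
    (hG : KConnected G 3) (hC : 3 ≤ C.ncard) (hK : K ⊆ H) (hne : K.Nonempty) (hx : x ∉ K)
    (hKx : ∀ a ∈ K, ∀ c ∈ H, G.Adj a c → c ∈ insert x K) : (attachments G C K).Nontrivial := by
  obtain ⟨a, ha⟩ := hne
  have hax : a ≠ x := fun h => hx (h ▸ ha)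
  obtain ⟨c, hc, -⟩ := hH.exists_attachment (T := {x}) hG (by simp) hC hK ⟨ha, hax⟩
    fun a ha c hc hac => (hKx a ha c hc hac).symm
  have hac : a ≠ c := fun h => hH.disjoint.notMem_of_mem_left (hK ha) (h ▸ hc.1)
  obtain ⟨d, hd, hdT⟩ := hH.exists_attachment (T := {x, c}) hG
    ((Set.ncard_insert_le x {c}).trans_lt (by simp)) hC hK ⟨ha, by simp [hax, hac]⟩
    fun a ha c hc hac => (hKx a ha c hc hac).symm.imp_right Or.inl
  exact ⟨c, attachments_mono Set.sdiff_subset hc, d, attachments_mono Set.sdiff_subset hd,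
    fun h => hdT (.inr h.symm)⟩

lemma attachments_iUnion {L : Type*} {K : L → Set V} :
    attachments G C (⋃ l, K l) = ⋃ l, attachments G C (K l) := by
  ext c
  simp only [attachments, Set.mem_iUnion, Set.mem_sep_iff]
  tauto

end Attachments

section SpreadOnCycles

variable {G : SimpleGraph V} {H : Set V} {v : V} {w : G.Walk v v} {L : Type*} {K : L → Set V}
  {E : ℕ}

lemma IsLongestCycle.exists_isSpreadWith_of_base (hw : IsLongestCycle w)
    (hH : IsComponentOff G {c | c ∈ w.support} H) (hK : ∀ l, K l ⊆ H)
    (hE : Pairwise fun l l' => ∀ a ∈ K l, ∀ b ∈ K l', LongPathIn G H a b E)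
    (hv : v ∈ ⋃ l, attachments G {c | c ∈ w.support} (K l))
    (hnt : (⋃ l, attachments G {c | c ∈ w.support} (K l)).Nontrivial) :
    ∃ t, IsSpreadWith (fun l => attachments G {c | c ∈ w.support} (K l)) E t w.length := by
  have hpos : ∀ c ∈ w.support, ∃ j < w.length, w.getVert j = c := fun c hc => by
    obtain ⟨m, rfl, hm⟩ := Walk.mem_support_iff_exists_getVert.1 hc
    rcases hm.lt_or_eq with h | rfl
    · exact ⟨m, h, rfl⟩
    · exact ⟨0, hw.1.three_le_length.trans_lt' (by omega), by simp⟩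
  refine exists_isSpreadWith (f := w.getVert) (by simp) (fun l c hc => hpos c hc.1)
    (by simpa using hv) ?_ ?_
  · obtain ⟨c, hc, hcv⟩ := hnt.exists_ne v
    obtain ⟨l, hl⟩ := Set.mem_iUnion.1 hc
    obtain ⟨j, hj, rfl⟩ := hpos c hl.1
    refine ⟨j, Nat.pos_of_ne_zero ?_, hj, l, hl⟩
    rintro rfl
    exact hcv w.getVert_zero
  · rintro i j hij hj hji l ⟨-, a, ha, hia⟩ l' ⟨-, b, hb, hjb⟩
    have hab : ReachableIn G H a b := hH.connected (hK l ha) (hK l' hb)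
    refine ⟨hw.add_two_le hH.disjoint hij hj hji hia hjb hab.longPathIn, fun hll' => ?_⟩
    exact hw.add_two_le hH.disjoint hij hj hji hia hjb (hE hll' a ha b hb)

lemma IsLongestCycle.exists_isSpreadWith (hw : IsLongestCycle w)
    (hH : IsComponentOff G {c | c ∈ w.support} H) (hK : ∀ l, K l ⊆ H)
    (hE : Pairwise fun l l' => ∀ a ∈ K l, ∀ b ∈ K l', LongPathIn G H a b E)
    (hnt : (⋃ l, attachments G {c | c ∈ w.support} (K l)).Nontrivial) :
    ∃ t, IsSpreadWith (fun l => attachments G {c | c ∈ w.support} (K l)) E t w.length := by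
  classical
  obtain ⟨u, hu⟩ := hnt.nonempty
  obtain ⟨l, hl⟩ := Set.mem_iUnion.1 hu
  have hsupp : {c | c ∈ (w.rotate u hl.1).support} = {c | c ∈ w.support} :=
    Set.ext fun _ => w.mem_support_rotate_iff u hl.1
  have hspread := (hw.rotate hl.1).exists_isSpreadWith_of_base (H := H) (K := K) (E := E)
  rw [hsupp, w.length_rotate] at hspread
  exact hspread hH hK hE hu hnt

end SpreadOnCycles

section LowerBounds

variable {G : SimpleGraph V} {C H : Set V} {E n t δ : ℕ} {v : V} {w : G.Walk v v}

lemma IsComponentOff.three_le_of_isSpreadWith [Fintype V] (hH : IsComponentOff G C H)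
    (hG : KConnected G 3) (hC : 3 ≤ C.ncard) (hcard : 3 ≤ H.ncard)
    (hA : IsSpreadWith (fun a : H => attachments G C {a.1}) E t n) : 3 ≤ t := by
  obtain ⟨P, Q, hPQ, hcover⟩ := hA.exists_cover
  by_contra! ht
  have hT : ((P : Set V) ∪ (↑) '' (Q : Set H)).ncard < 3 := by
    have h1 := Set.ncard_union_le (P : Set V) ((↑) '' (Q : Set H))
    have h2 := Set.ncard_image_le (f := ((↑) : H → V)) Q.finite_toSet
    rw [Set.ncard_coe_finset] at h1 h2
    omega
  obtain ⟨a, ha⟩ := Set.exists_mem_notMem_of_ncard_lt_ncard (hT.trans_le hcard)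
  obtain ⟨c, ⟨hcC, b, ⟨hbH, hbT⟩, hcb⟩, hcT⟩ :=
    hH.exists_attachment hG hT hC subset_rfl ha fun _ _ c hc _ => .inl hc
  rcases hcover ⟨b, hbH⟩ c ⟨hcC, b, rfl, hcb⟩ with h | h
  · exact hcT (.inl h)
  · exact hbT (.inr ⟨_, h, rfl⟩)

lemma three_mul_le_of_two_mul_add_le {α β s D : ℕ} (hα : δ ≤ α + D) (hβ : δ ≤ β + D)
    (hsα : s ≤ α) (hsβ : s ≤ β) (hst : s ≤ t) (hn : 2 * (α + β) + D * t ≤ n + 2 * s)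
    (hD : 0 < D) (hDt : D ≤ 1 ∨ 3 ≤ t) : 3 * δ ≤ n + 3 := by
  obtain rfl | hD2 : D = 1 ∨ 2 ≤ D := by omega
  · omega
  · have ht : 3 ≤ t := hDt.resolve_left (by omega)
    obtain ⟨e, rfl⟩ := Nat.exists_eq_add_of_le' hD2
    have het : e * 3 ≤ e * t := Nat.mul_le_mul_left e ht
    rw [Nat.add_mul] at hn
    omega

lemma IsLongestCycle.three_mul_le_of_no_cutVertex [Fintype V] [DecidableRel G.Adj]
    (hw : IsLongestCycle w) (hG : KConnected G 3) (hH : IsComponentOff G {c | c ∈ w.support} H)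
    (hcut : ∀ x ∈ H, IsConnectedOn G (H \ {x})) (hnt : H.Nontrivial)
    (hδ : ∀ a ∈ H, δ ≤ G.degree a) : 3 * δ ≤ w.length + 3 := by
  have hC := three_le_ncard_support_of_isCycle hw.1
  obtain ⟨z, hz, y, hy, hzy, hle, hpath⟩ := hH.connected.exists_pairwise_longPathIn hcut hnt
  have hatt : (⋃ a : H, attachments G {c | c ∈ w.support} {a.1}).Nontrivial := by
    rw [← attachments_iUnion, Set.iUnion_of_singleton_coe]
    exact hH.nontrivial_attachments hG hC subset_rfl hnt.nonempty
      (hH.disjoint.notMem_of_mem_right w.start_mem_support) fun _ _ c hc _ => .inr hc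
  obtain ⟨t, hA⟩ := hw.exists_isSpreadWith hH (fun a : H => Set.singleton_subset_iff.2 a.2)
    (by
      rintro a b hab _ rfl _ rfl
      exact hpath a.2 b.2 (Subtype.coe_injective.ne hab)) hatt
  have hdz := (hδ z hz).trans (hH.degree_le (Set.singleton_subset_iff.2 hz) rfl)
  have hdy := (hδ y hy).trans (hH.degree_le (Set.singleton_subset_iff.2 hy) rfl)
  have hst := hA.ncard_inter_le (c := ⟨z, hz⟩) (d := ⟨y, hy⟩) (by simpa using hzy)
  have hlen := hA.add_le ⟨z, hz⟩ ⟨y, hy⟩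
  refine three_mul_le_of_two_mul_add_le (hdz.trans (Nat.add_le_add_left hle _)) hdy
    (Set.ncard_le_ncard Set.inter_subset_left) (Set.ncard_le_ncard Set.inter_subset_right)
    hst hlen (hH.connected.degreeIn_pos hy hz hzy.symm) ?_
  have hlt := degreeIn_lt_ncard (G := G) hy
  refine or_iff_not_imp_left.2 fun hD => hH.three_le_of_isSpreadWith hG hC (by omega) hA

lemma IsLongestCycle.three_mul_le_of_cutVertex [Fintype V] [DecidableRel G.Adj]
    (hw : IsLongestCycle w) (hG : KConnected G 3) (hH : IsComponentOff G {c | c ∈ w.support} H)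
    {x : V} (hx : x ∈ H) (hcut : ¬ IsConnectedOn G (H \ {x}))
    (hδ : ∀ a ∈ H, δ ≤ G.degree a) : 3 * δ ≤ w.length + 3 := by
  obtain ⟨y, hy, y', hy', hsep⟩ :
      ∃ y ∈ H \ {x}, ∃ y' ∈ H \ {x}, ¬ ReachableIn G (H \ {x}) y y' := by
    simpa only [IsConnectedOn, not_forall, exists_prop] using hcut
  obtain ⟨x₁, K₁, w₁, x₂, K₂, w₂, h₁, h₂, hw₁, hw₂, hpath⟩ :=
    hH.connected.exists_two_lobes hx hy.1 hy'.1 hy.2 hy'.2 hsep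
  have nontrivial_attachments {x K} (hK : IsLobe G H x K) :
      (attachments G {c | c ∈ w.support} K).Nontrivial :=
    hH.nontrivial_attachments hG (three_le_ncard_support_of_isCycle hw.1) hK.subset hK.nonempty
      hK.root_notMem hK.closed
  have degreeIn_pos {x K a} (hK : IsLobe G H x K) (ha : a ∈ K) : 0 < degreeIn G H a :=
    hH.connected.degreeIn_pos (hK.subset ha) hK.root_mem fun h => hK.root_notMem (h ▸ ha)
  have hn₁ := nontrivial_attachments h₁
  have hn₂ := nontrivial_attachments h₂
  obtain ⟨t, hA⟩ := hw.exists_isSpreadWith hH (K := fun b => cond b K₁ K₂)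
    (Bool.forall_bool.2 ⟨h₂.subset, h₁.subset⟩)
    (by
      rintro (_ | _) (_ | _) hne a ha b hb
      exacts [absurd rfl hne, (hpath b hb a ha).symm, hpath a ha b hb, absurd rfl hne])
    (hn₁.mono (Set.subset_iUnion_of_subset true subset_rfl))
  have ht : 2 ≤ t := hA.two_le (c := true) (d := false) (by simp) hn₁ hn₂
  have hst := hA.ncard_inter_le (c := true) (d := false) (by simp)
  have hlen := hA.add_le true false
  have hd₁ := (hδ w₁ (h₁.subset hw₁)).trans (hH.degree_le h₁.subset hw₁)
  have hd₂ := (hδ w₂ (h₂.subset hw₂)).trans (hH.degree_le h₂.subset hw₂)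
  have hpos₁ := degreeIn_pos h₁ hw₁
  have hpos₂ := degreeIn_pos h₂ hw₂
  obtain ⟨e, he⟩ : ∃ e, degreeIn G H w₁ + degreeIn G H w₂ = e + 2 :=
    Nat.exists_eq_add_of_le' (by omega)
  have het : e * 2 ≤ e * t := Nat.mul_le_mul_left e ht
  rw [he, Nat.add_mul] at hlen
  simp only [cond_true, cond_false] at hlen hst
  omega

end LowerBounds

theorem jung_dominating_general {G : SimpleGraph V} [Fintype V] [DecidableRel G.Adj]
    (h3 : KConnected G 3) {v : V} {w : G.Walk v v} (hw : IsLongestCycle w) {δ : ℕ}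
    (hδ : ∀ a ∉ w.support, δ ≤ G.degree a) :
    3 * δ ≤ w.length + 3 ∨ IsDominatingCycle w := by
  refine or_iff_not_imp_right.2 fun hdom => ?_
  obtain ⟨x, y, hxy, hx, hy⟩ : ∃ x y, G.Adj x y ∧ x ∉ w.support ∧ y ∉ w.support := by
    simpa [IsDominatingCycle, hw.1] using hdom
  have hH : IsComponentOff G {c | c ∈ w.support} (componentIn G {c | c ∈ w.support}ᶜ x) :=
    isComponentOff_componentIn
  have hx' := mem_componentIn_self (G := G) (S := {c | c ∈ w.support}ᶜ) hx
  have hδ' := fun a ha => hδ a (hH.disjoint.notMem_of_mem_left ha)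
  by_cases hcut : ∀ z ∈ componentIn G {c | c ∈ w.support}ᶜ x,
      IsConnectedOn G (componentIn G {c | c ∈ w.support}ᶜ x \ {z})
  · exact hw.three_mul_le_of_no_cutVertex h3 hH hcut ⟨x, hx', y, hH.closed hx' hy hxy, hxy.ne⟩ hδ'
  · push Not at hcut
    obtain ⟨z, hz, hzcut⟩ := hcut
    exact hw.three_mul_le_of_cutVertex h3 hH hz hzcut hδ'

theorem jung_dominating (G : SimpleGraph V) [Fintype V] [DecidableRel G.Adj]
    (h3 : KConnected G 3) :
    (circumference G : ℤ) ≥ 3 * G.minDegree - 3 ∨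
      ∀ (v : V) (w : G.Walk v v), IsLongestCycle w → IsDominatingCycle w := by
  refine or_iff_not_imp_left.2 fun hc v w hw => ?_
  refine (jung_dominating_general h3 hw fun a _ => G.minDegree_le_degree a).resolve_left ?_
  have := hw.length_eq_circumference
  omega
end
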